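/- arXiv:2602.14852 — 4 statements merged into one kernel-verified Lean document; each statement's English description precedes it below -/
import Mathlib

section
/- Let G = (V,E) be a finite connected graph, ν a fully supported positive measure on E, |||·||| a seminorm on ℝ^V with |||1_V||| = 0, and C ∈ [0,∞). If |||1_A||| ≤ C·‖1_A‖_{W^{1,1}(ν)} for every simply connected subset A ⊆ V, then |||f||| ≤ C·‖f‖_{W^{1,1}(ν)} for every function f: V → ℝ. -/
open Finset

/-- The `W^{1,1}(ν)` Sobolev seminorm of `f : V → ℝ` on a graph `G` with edge measure `ν`:
`Σ_{uv ∈ E(G)} |f u − f v| · ν(uv)`. -/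
noncomputable def sobolevW11 {V : Type*} [Fintype V] [DecidableEq V]
    (G : SimpleGraph V) [DecidableRel G.Adj] (ν : Sym2 V → ℝ) (f : V → ℝ) : ℝ :=
  ∑ e ∈ G.edgeFinset,
    (Sym2.lift ⟨fun u v => |f u - f v|, fun u v => abs_sub_comm (f u) (f v)⟩ e) * ν e

open Classical in
/-- Ordered pairs forming the edge boundary of `A`. -/
noncomputable def cutPairs {V : Type} [Fintype V] (G : SimpleGraph V) (A : Set V) :
    Finset (V × V) :=
  Finset.univ.filter fun q => q.1 ∈ A ∧ q.2 ∉ A ∧ G.Adj q.1 q.2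

open Classical in
/-- Ordered pairs of adjacent vertices on which `f` differs. -/
noncomputable def gradPairs {V : Type} [Fintype V] (G : SimpleGraph V) (f : V → ℝ) :
    Finset (V × V) :=
  Finset.univ.filter fun q => G.Adj q.1 q.2 ∧ f q.1 ≠ f q.2

theorem mem_cutPairs {V : Type} [Fintype V] (G : SimpleGraph V) (A : Set V) (u v : V) :
    (u, v) ∈ cutPairs G A ↔ u ∈ A ∧ v ∉ A ∧ G.Adj u v := by
  simp [cutPairs]

theorem mem_gradPairs {V : Type} [Fintype V] (G : SimpleGraph V) (f : V → ℝ) (u v : V) :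
    (u, v) ∈ gradPairs G f ↔ G.Adj u v ∧ f u ≠ f v := by
  simp [gradPairs]

theorem exists_cut {V : Type} (G : SimpleGraph V) (hG : G.Connected) (S : Set V)
    (x y : V) (hx : x ∈ S) (hy : y ∉ S) : ∃ u v, u ∈ S ∧ v ∉ S ∧ G.Adj u v := by
  by_contra! h
  obtain ⟨w⟩ := hG.preconnected x y
  have : ∀ {a b : V}, G.Walk a b → a ∈ S → b ∈ S := by
    intro a b w
    induction w with
    | nil => exact id
    | cons hadj _ ih =>
      intro ha
      apply ih
      by_contra hb
      exact h _ _ ha hb hadj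
  exact hy (this w hx)

theorem exists_split {V : Type} (G : SimpleGraph V) (A : Set V) (hA : A.Nonempty)
    (h : ¬ (G.induce A).Connected) :
    ∃ B : Set V, B ⊆ A ∧ B.Nonempty ∧ (∃ y ∈ A, y ∉ B) ∧
      ∀ u ∈ B, ∀ v ∈ A, v ∉ B → ¬ G.Adj u v := by
  have : Nonempty A := hA.to_subtype
  have h2 : ¬ (G.induce A).Preconnected := fun hp => h ⟨hp⟩
  unfold SimpleGraph.Preconnected at h2
  push Not at h2
  obtain ⟨x, y, hxy⟩ := h2
  refine ⟨{v | ∃ hv : v ∈ A, (G.induce A).Reachable x ⟨v, hv⟩}, ?_, ?_, ?_, ?_⟩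
  · rintro v ⟨hv, _⟩
    exact hv
  · exact ⟨x, x.2, SimpleGraph.Reachable.refl _⟩
  · exact ⟨y, y.2, fun ⟨_, hr⟩ => hxy hr⟩
  · rintro u ⟨hu, hr⟩ v hv hvB hadj
    refine hvB ⟨hv, hr.trans (SimpleGraph.Adj.reachable ?_)⟩
    simpa using hadj

/-- A nonconstant function admits a simply connected set across whose boundary it drops. -/
theorem exists_sc {V : Type} [Fintype V] (G : SimpleGraph V) (hG : G.Connected) (f : V → ℝ)
    (hf : ¬ ∃ c, ∀ v, f v = c) :
    ∃ A : Set V, (G.induce A).Connected ∧ (G.induce Aᶜ).Connected ∧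
      A.Nonempty ∧ Aᶜ.Nonempty ∧ ∀ u v, u ∈ A → v ∉ A → G.Adj u v → f v < f u := by
  classical
  have : Nonempty V := hG.nonempty
  let P : Set V → Prop := fun A =>
    A.Nonempty ∧ Aᶜ.Nonempty ∧ ∀ u v, u ∈ A → v ∉ A → G.Adj u v → f v < f u
  obtain ⟨m, hm⟩ := Finite.exists_max f
  have hP0 : P {v | f v = f m} := by
    refine ⟨⟨m, rfl⟩, ?_, ?_⟩
    · by_contra hne
      rw [Set.not_nonempty_iff_eq_empty] at hne
      refine hf ⟨f m, fun v => ?_⟩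
      by_contra hv
      have : v ∈ ({v | f v = f m} : Set V)ᶜ := hv
      rw [hne] at this
      exact this
    · intro u v hu hv _
      have hu' : f u = f m := hu
      have hv' : f v ≠ f m := hv
      rw [hu']
      exact lt_of_le_of_ne (hm v) hv'
  obtain ⟨A, hPA, hmin⟩ := Finset.exists_min_image
    (Finset.univ.filter P : Finset (Set V)) (fun A => (cutPairs G A).card)
    ⟨_, by simpa using hP0⟩
  have hPA : P A := by simpa using hPA
  have hmin : ∀ B, P B → (cutPairs G A).card ≤ (cutPairs G B).card :=
    fun B hB => hmin B (by simpa using hB)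
  obtain ⟨hne, hne', hdrop⟩ := hPA
  refine ⟨A, ?_, ?_, hne, hne', hdrop⟩
  · by_contra hc
    obtain ⟨B, hBA, ⟨x, hx⟩, ⟨y, hyA, hyB⟩, hno⟩ := exists_split G A hne hc
    have key : ∀ u v, u ∈ B → v ∉ B → G.Adj u v → v ∉ A :=
      fun u v hu hv ha hvA => hno u hu v hvA hv ha
    have hPB : P B := ⟨⟨x, hx⟩, ⟨y, hyB⟩,
      fun u v hu hv ha => hdrop u v (hBA hu) (key u v hu hv ha) ha⟩
    refine absurd (hmin B hPB) (not_le.2 (Finset.card_lt_card ?_))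
    rw [Finset.ssubset_iff_of_subset]
    · obtain ⟨z, hz⟩ := hne'
      obtain ⟨u, v, hu, hv, ha⟩ := exists_cut G hG (A \ B) y z ⟨hyA, hyB⟩ (fun h => hz h.1)
      refine ⟨(u, v), (mem_cutPairs _ _ _ _).2 ⟨hu.1, fun hvA => ?_, ha⟩,
        fun h => hu.2 ((mem_cutPairs _ _ _ _).1 h).1⟩
      have hvB : v ∈ B := by
        by_contra hvB
        exact hv ⟨hvA, hvB⟩
      exact hno v hvB u hu.1 hu.2 ha.symm
    · rintro ⟨u, v⟩ h
      rw [mem_cutPairs] at h ⊢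
      exact ⟨hBA h.1, key u v h.1 h.2.1 h.2.2, h.2.2⟩
  · by_contra hc
    obtain ⟨B, hBA, ⟨x, hx⟩, ⟨y, hyA, hyB⟩, hno⟩ := exists_split G Aᶜ hne' hc
    have key : ∀ u v, u ∉ B → v ∈ B → G.Adj u v → u ∈ A := by
      intro u v hu hv ha
      by_contra huA
      exact hno v hv u huA hu ha.symm
    have hPB : P Bᶜ := ⟨⟨y, hyB⟩, ⟨x, fun h => h hx⟩, fun u v hu hv ha =>
      have hv' : v ∈ B := not_not.1 hv
      hdrop u v (key u v hu hv' ha) (hBA hv') ha⟩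
    refine absurd (hmin _ hPB) (not_le.2 (Finset.card_lt_card ?_))
    rw [Finset.ssubset_iff_of_subset]
    · obtain ⟨z, hz⟩ := hne
      obtain ⟨v, u, hv, hu, ha⟩ := exists_cut G hG (Aᶜ \ B) y z ⟨hyA, hyB⟩ (fun h => h.1 hz)
      have huB : u ∉ B := fun huB => hno u huB v hv.1 hv.2 ha.symm
      refine ⟨(u, v), (mem_cutPairs _ _ _ _).2 ⟨?_, hv.1, ha.symm⟩,
        fun h => ((mem_cutPairs _ _ _ _).1 h).2.1 hv.2⟩
      by_contra huA
      exact hu ⟨huA, huB⟩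
    · rintro ⟨u, v⟩ h
      rw [mem_cutPairs] at h ⊢
      have hv' : v ∈ B := not_not.1 h.2.1
      exact ⟨key u v h.1 hv' h.2.2, hBA hv', h.2.2⟩

/-- **Reduction to simply connected sets.** Let `G = (V,E)` be a finite
connected graph, `ν` a fully supported positive measure on `E`, `|||·|||` a seminorm on
`ℝ^V` vanishing on `1_V`, and `C ∈ [0,∞)`. If `|||1_A||| ≤ C·‖1_A‖_{W^{1,1}(ν)}` for every
simply connected `A ⊆ V` (i.e. both `A` and `Aᶜ` induce connected subgraphs), then
`|||f||| ≤ C·‖f‖_{W^{1,1}(ν)}` for every `f : V → ℝ`. -/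
theorem seminorm_le_of_simply_connected
    {V : Type} [Fintype V] [DecidableEq V]
    (G : SimpleGraph V) [DecidableRel G.Adj] (hG : G.Connected)
    (ν : Sym2 V → ℝ) (hν : ∀ e ∈ G.edgeSet, 0 < ν e)
    (p : Seminorm ℝ (V → ℝ)) (hp1 : p (fun _ => (1 : ℝ)) = 0)
    (C : ℝ) (hC : 0 ≤ C)
    (hSC : ∀ A : Set V, ((G.induce A).Connected ∧ (G.induce Aᶜ).Connected) →
      p (A.indicator fun _ => (1 : ℝ)) ≤ C * sobolevW11 G ν (A.indicator fun _ => (1 : ℝ))) :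
    ∀ f : V → ℝ, p f ≤ C * sobolevW11 G ν f := by
  classical
  intro f
  induction hn : (gradPairs G f).card using Nat.strong_induction_on generalizing f with
  | _ n ih =>
  by_cases hf : ∃ c, ∀ v, f v = c
  · obtain ⟨c, hc⟩ := hf
    have h1 : f = c • (fun _ => (1 : ℝ)) := by
      funext v
      simp [hc v]
    have h2 : p f = 0 := by rw [h1, map_smul_eq_mul, hp1, mul_zero]
    rw [h2]
    refine mul_nonneg hC (Finset.sum_nonneg fun e he => mul_nonneg ?_
      (hν e (SimpleGraph.mem_edgeFinset.1 he)).le)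
    induction e with
    | _ u v => exact abs_nonneg _
  · obtain ⟨A, hA, hA', ⟨x, hx⟩, ⟨y, hy⟩, hdrop⟩ := exists_sc G hG f hf
    obtain ⟨u₀, v₀, hu₀, hv₀, ha₀⟩ := exists_cut G hG A x y hx hy
    obtain ⟨⟨a, b⟩, hab, hmin⟩ := Finset.exists_min_image (cutPairs G A)
      (fun q => f q.1 - f q.2) ⟨(u₀, v₀), (mem_cutPairs _ _ _ _).2 ⟨hu₀, hv₀, ha₀⟩⟩
    rw [mem_cutPairs] at hab
    obtain ⟨haA, hbA, hadj⟩ := hab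
    have hmin : ∀ u v, u ∈ A → v ∉ A → G.Adj u v → f a - f b ≤ f u - f v :=
      fun u v hu hv h => hmin (u, v) ((mem_cutPairs _ _ _ _).2 ⟨hu, hv, h⟩)
    obtain ⟨t, ht⟩ : ∃ t, t = f a - f b := ⟨_, rfl⟩
    have htpos : 0 < t := by
      rw [ht]
      exact sub_pos.2 (hdrop a b haA hbA hadj)
    rw [← ht] at hmin
    obtain ⟨χ, hχ⟩ : ∃ χ : V → ℝ, χ = A.indicator fun _ => (1 : ℝ) := ⟨_, rfl⟩
    have hin : ∀ u, u ∈ A → χ u = 1 := fun u hu => by simp [hχ, hu]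
    have hout : ∀ u, u ∉ A → χ u = 0 := fun u hu => by simp [hχ, hu]
    have hsc := hSC A ⟨hA, hA'⟩
    rw [← hχ] at hsc
    obtain ⟨g, hg⟩ : ∃ g : V → ℝ, g = f - t • χ := ⟨_, rfl⟩
    have hgv : ∀ u, g u = f u - t * χ u := fun u => by simp [hg]
    have hfg : f = g + t • χ := by simp [hg]
    have hsub : sobolevW11 G ν f = sobolevW11 G ν g + t * sobolevW11 G ν χ := by
      unfold sobolevW11
      rw [Finset.mul_sum, ← Finset.sum_add_distrib]
      refine Finset.sum_congr rfl fun e he => ?_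
      have he := SimpleGraph.mem_edgeFinset.1 he
      induction e with
      | _ u v =>
        have huv : G.Adj u v := he
        have : |f u - f v| = |g u - g v| + t * |χ u - χ v| := by
          rw [hgv, hgv]
          by_cases hu : u ∈ A <;> by_cases hv : v ∈ A
          · rw [hin u hu, hin v hv]; simp
          · rw [hin u hu, hout v hv]
            have := hmin u v hu hv huv
            rw [abs_of_nonneg (by linarith), abs_of_nonneg (by linarith)]
            simp
            ring
          · rw [hin v hv, hout u hu]
            have := hmin v u hv hu huv.symm
            rw [abs_of_nonpos (by linarith), abs_of_nonpos (by linarith)]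
            simp
            ring
          · rw [hout u hu, hout v hv]; simp
        simp only [Sym2.lift_mk, this]
        ring
    have hlt : (gradPairs G g).card < n := by
      rw [← hn]
      apply Finset.card_lt_card
      rw [Finset.ssubset_iff_of_subset]
      · refine ⟨(a, b), (mem_gradPairs _ _ _ _).2 ⟨hadj, ?_⟩, ?_⟩
        · intro h
          linarith
        · intro h
          apply ((mem_gradPairs _ _ _ _).1 h).2
          rw [hgv, hgv, hin a haA, hout b hbA]
          linarith
      · rintro ⟨u, v⟩ h
        rw [mem_gradPairs] at h ⊢
        obtain ⟨huv, hne⟩ := h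
        refine ⟨huv, fun heq => ?_⟩
        by_cases hu : u ∈ A <;> by_cases hv : v ∈ A
        · exact hne (by rw [hgv, hgv, hin u hu, hin v hv, heq])
        · have := hmin u v hu hv huv
          linarith
        · have := hmin v u hv hu huv.symm
          linarith
        · exact hne (by rw [hgv, hgv, hout u hu, hout v hv, heq])
    have hig := ih _ hlt g rfl
    calc p f = p (g + t • χ) := by rw [← hfg]
      _ ≤ p g + p (t • χ) := map_add_le_add p _ _
      _ = p g + t * p χ := by
        rw [map_smul_eq_mul, Real.norm_of_nonneg htpos.le]
      _ ≤ C * sobolevW11 G ν g + t * (C * sobolevW11 G ν χ) :=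
        add_le_add hig (mul_le_mul_of_nonneg_left hsc htpos.le)
      _ = C * sobolevW11 G ν f := by rw [hsub]; ring
end

section
/- Let G = (V,E) be a finite unweighted graph with shortest-path metric d, let A ⊆ V be a connected subset, and suppose there exist r > 0 and an r-separated subset S ⊆ A (meaning d(u,v) ≥ r for all distinct u,v ∈ S) with |S| ≥ 2. Then r·|S| ≤ 3·|A|. -/
theorem exists_at_dist {W : Type} (H : SimpleGraph W) (hH : H.Connected) (s u : W) (k : ℕ)
    (hk : k ≤ H.dist s u) : ∃ a, H.dist s a = k := by
  induction k with
  | zero => exact ⟨s, by simp⟩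
  | succ k _ =>
    obtain ⟨p, hp⟩ := hH.exists_walk_length_eq_dist s u
    refine ⟨p.getVert (k + 1), le_antisymm ?_ ?_⟩
    · refine (SimpleGraph.dist_le (p.take (k + 1))).trans ?_
      simp
    · have h1 := SimpleGraph.dist_le (p.drop (k + 1))
      have h2 := hH.dist_triangle (u := s) (v := p.getVert (k + 1)) (w := u)
      rw [SimpleGraph.Walk.drop_length] at h1
      omega

/-- Let `G = (V,E)` be a finite unweighted graph with shortest-path
metric `d`, let `A ⊆ V` be a connected subset, and suppose there exist `r > 0` and an
`r`-separated subset `S ⊆ A` (i.e. `d(u,v) ≥ r` for all distinct `u,v ∈ S`) with `|S| ≥ 2`.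
Then `r·|S| ≤ 3·|A|`. -/
theorem separated_subset_card_bound
    {V : Type} [Fintype V] (G : SimpleGraph V) (A : Set V)
    (hA : (G.induce A).Connected)
    (r : ℝ) (hr : 0 < r) (S : Set V) (hSA : S ⊆ A)
    (hsep : ∀ u ∈ S, ∀ v ∈ S, u ≠ v → r ≤ (G.dist u v : ℝ))
    (hS2 : 2 ≤ S.ncard) :
    r * S.ncard ≤ 3 * A.ncard := by
  classical
  have hle : ∀ x y : A, G.dist x y ≤ (G.induce A).dist x y := by
    intro x y
    obtain ⟨p, hp⟩ := hA.exists_walk_length_eq_dist x y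
    rw [← hp]
    have h := SimpleGraph.dist_le (p.map (SimpleGraph.Embedding.induce A).toHom)
    rw [SimpleGraph.Walk.length_map] at h
    exact h
  have hex : ∀ q : S × Fin ⌈r / 2⌉₊,
      ∃ a : A, (G.induce A).dist ⟨q.1, hSA q.1.2⟩ a = (q.2 : ℕ) := by
    rintro ⟨s, k⟩
    obtain ⟨u, huS, hus⟩ := Set.exists_ne_of_one_lt_ncard (s := S) (by omega) s.1
    apply exists_at_dist _ hA _ ⟨u, hSA huS⟩
    have h1 := hsep s.1 s.2 u huS hus.symm
    have h2 := hle ⟨s.1, hSA s.2⟩ ⟨u, hSA huS⟩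
    have h3 : ((k : ℕ) : ℝ) < r / 2 := Nat.lt_ceil.1 k.2
    have h4 : ((k : ℕ) : ℝ) ≤ (G.dist s.1 u : ℝ) := by linarith
    exact (Nat.cast_le.1 h4).trans h2
  choose f hf using hex
  have hinj : Function.Injective f := by
    rintro ⟨s, k⟩ ⟨t, l⟩ h
    have h1 := hf (s, k)
    have h2 := hf (t, l)
    rw [← h] at h2
    dsimp only at h1 h2
    have hst : s = t := by
      by_contra hne
      have h3 := hsep s.1 s.2 t.1 t.2 (fun e => hne (Subtype.ext e))
      have h4 := hle ⟨s.1, hSA s.2⟩ ⟨t.1, hSA t.2⟩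
      have h5 := hA.dist_triangle (u := ⟨s.1, hSA s.2⟩) (v := f (s, k)) (w := ⟨t.1, hSA t.2⟩)
      rw [SimpleGraph.dist_comm (u := f (s, k)), h1, h2] at h5
      have h6 : ((k : ℕ) : ℝ) < r / 2 := Nat.lt_ceil.1 k.2
      have h7 : ((l : ℕ) : ℝ) < r / 2 := Nat.lt_ceil.1 l.2
      have h8 : (G.dist s.1 t.1 : ℝ) ≤ ((k : ℕ) : ℝ) + ((l : ℕ) : ℝ) := by
        exact_mod_cast h4.trans h5
      linarith
    subst hst
    rw [h1] at h2
    rw [Fin.ext h2]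
  have hcard := Nat.card_le_card_of_injective f hinj
  rw [Nat.card_prod, Nat.card_fin, Nat.card_coe_set_eq, Nat.card_coe_set_eq] at hcard
  have hc : (S.ncard : ℝ) * (⌈r / 2⌉₊ : ℝ) ≤ (A.ncard : ℝ) := by exact_mod_cast hcard
  have h9 : (S.ncard : ℝ) * (r / 2) ≤ (S.ncard : ℝ) * (⌈r / 2⌉₊ : ℝ) :=
    mul_le_mul_of_nonneg_left (Nat.le_ceil _) (Nat.cast_nonneg _)
  have h10 : (0 : ℝ) ≤ (A.ncard : ℝ) := Nat.cast_nonneg _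
  linarith
end

section
/- There exist constants c > 0 and s₀ such that for every integer s ≥ s₀, c₁(M₂^s) ≥ c·log s, where M₂^s is the set of uniform probability distributions on s-point subsets of ℝ² equipped with the earth mover's distance. -/
open Finset MeasureTheory

/-- The `L₁`-distortion of a space `M` equipped with a distance function `ρ`:
the infimum of `D ≥ 1` such that there is a measure space `(Ω, ν)` and a map
`f : M → L₁(ν)` with `ρ x y ≤ ‖f x - f y‖₁ ≤ D * ρ x y` for all `x, y`. -/
noncomputable def c1OfDist {M : Type*} (ρ : M → M → ℝ) : ℝ :=
  sInf { D : ℝ | 1 ≤ D ∧ ∃ (Ω : Type) (_ : MeasurableSpace Ω) (ν : Measure Ω)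
    (f : M → Lp ℝ 1 ν), ∀ x y : M,
      ρ x y ≤ dist (f x) (f y) ∧ dist (f x) (f y) ≤ D * ρ x y }

/-- The earth mover's (Wasserstein-1) distance between the uniform distributions on two
finite subsets `S, T` of the Euclidean plane, via the Kantorovich dual formulation:
`sup{|∫ f dμ_S − ∫ f dμ_T| : f 1-Lipschitz}`. -/
noncomputable def emdUnif (S T : Finset (EuclideanSpace ℝ (Fin 2))) : ℝ :=
  sSup { c : ℝ | ∃ f : EuclideanSpace ℝ (Fin 2) → ℝ, LipschitzWith 1 f ∧
    c = |(∑ x ∈ S, f x) / S.card - (∑ y ∈ T, f y) / T.card| }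

/-- horizontal/vertical boundary count of a predicate on an `n × n` block -/
theorem iso_aux (n : ℕ) (A : ℕ → ℕ → Prop) (h v : ℕ)
    (F G : Finset (ℕ × ℕ))
    (hF' : ∀ p ∈ F, p.1 < n ∧ p.2 < n ∧ A p.1 p.2)
    (hG' : ∀ p ∈ G, p.1 < n ∧ p.2 < n ∧ ¬ A p.1 p.2)
    (r c : Finset ℕ)
    (hr : ∀ y, y < n → (∃ x < n, A x y) → (∃ x < n, ¬ A x y) → y ∈ r)
    (hc : ∀ x, x < n → (∃ y < n, A x y) → (∃ y < n, ¬ A x y) → x ∈ c)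
    (hrh : r.card ≤ h) (hcv : c.card ≤ v) :
    F.card ≤ (h+v)^2 ∨ G.card ≤ (h+v)^2 := by
  have sub : ∀ E : Finset (ℕ × ℕ), (∀ p ∈ E, p.1 ∈ c ∧ p.2 ∈ r) → E.card ≤ (h+v)^2 := by
    intro E hE
    have : E ⊆ c ×ˢ r := fun p hp => by simpa using hE p hp
    have h1 := card_le_card this
    rw [card_product] at h1
    nlinarith [Nat.mul_le_mul hcv hrh]
  have big : ∀ E : Finset (ℕ × ℕ), (∀ p ∈ E, p.1 < n ∧ p.2 < n) → n ≤ h + v → E.card ≤ (h+v)^2 := by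
    intro E hE hn
    have : E ⊆ range n ×ˢ range n := fun p hp => by simpa using hE p hp
    have h1 := card_le_card this
    rw [card_product, card_range] at h1
    nlinarith [Nat.mul_le_mul hn hn]
  have bigF : n ≤ h + v → F.card ≤ (h+v)^2 := big F (fun p hp => ⟨(hF' p hp).1, (hF' p hp).2.1⟩)
  have allc : (∀ x < n, x ∈ c) → n ≤ h + v := by
    intro hx
    have : range n ⊆ c := fun x hx' => hx x (by simpa using hx')
    have := card_le_card this
    simp at this; omega
  have allr : (∀ x < n, x ∈ r) → n ≤ h + v := by
    intro hx
    have : range n ⊆ r := fun x hx' => hx x (by simpa using hx')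
    have := card_le_card this
    simp at this; omega
  by_cases fr : ∃ y < n, ∀ x < n, A x y
  · obtain ⟨y0, hy0, hfull⟩ := fr
    by_cases er : ∃ y < n, ∀ x < n, ¬ A x y
    · obtain ⟨y1, hy1, hemp⟩ := er
      exact Or.inl (bigF (allc fun x hx => hc x hx ⟨y0, hy0, hfull x hx⟩ ⟨y1, hy1, hemp x hx⟩))
    · push Not at er
      by_cases ec : ∃ x < n, ∀ y < n, ¬ A x y
      · obtain ⟨x1, hx1, hemp⟩ := ec
        exact absurd (hfull x1 hx1) (hemp y0 hy0)
      · push Not at ec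
        by_cases fc : ∃ x < n, ∀ y < n, A x y
        · right
          apply sub
          intro p hp
          obtain ⟨h1, h2, h3⟩ := hG' p hp
          exact ⟨hc _ h1 (ec _ h1) ⟨_, h2, h3⟩, hr _ h2 (er _ h2) ⟨_, h1, h3⟩⟩
        · push Not at fc
          exact Or.inl (bigF (allc fun x hx => hc x hx (ec x hx) (fc x hx)))
  · push Not at fr
    by_cases fc : ∃ x < n, ∀ y < n, A x y
    · obtain ⟨x0, hx0, hfull⟩ := fc
      exact Or.inl (bigF (allr fun y hy => hr y hy ⟨x0, hx0, hfull y hy⟩ (fr y hy)))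
    · push Not at fc
      left
      apply sub
      intro p hp
      obtain ⟨h1, h2, h3⟩ := hF' p hp
      exact ⟨hc _ h1 ⟨_, h2, h3⟩ (fc _ h1), hr _ h2 ⟨_, h1, h3⟩ (fr _ h2)⟩

theorem exists_switch (n : ℕ) (B : ℕ → Prop) (h1 : ∃ x < n, B x) (h2 : ∃ x < n, ¬ B x) :
    ∃ x < n, ¬ (B x ↔ B (x+1)) := by
  by_contra hcon
  push Not at hcon
  obtain ⟨x, hx, hB⟩ := h1
  obtain ⟨y, hy, hB'⟩ := h2
  have key : ∀ z, z < n → (B z ↔ B 0) := by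
    intro z
    induction z with
    | zero => simp
    | succ k ih => intro hk; rw [← hcon k (by omega)]; exact ih (by omega)
  exact hB' ((key y hy).2 ((key x hx).1 hB))

/-- real 0/1 indicator -/
noncomputable def chi (A : ℕ → ℕ → Prop) (x y : ℕ) : ℝ := by
  classical exact if A x y then 1 else 0

theorem chi_abs (A : ℕ → ℕ → Prop) (x y x' y' : ℕ) :
    (|chi A x y - chi A x' y'| = 0 ∧ (A x y ↔ A x' y')) ∨
    (|chi A x y - chi A x' y'| = 1 ∧ ¬ (A x y ↔ A x' y')) := by
  unfold chi
  by_cases h1 : A x y <;> by_cases h2 : A x' y' <;> simp [h1, h2]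

/-- perimeter functional on a block with corner `(c,d)` and side `n` -/
noncomputable def per {E : Type*} [NormedAddCommGroup E] (h : ℕ → ℕ → E) (c d n : ℕ) : ℝ :=
  ∑ x ∈ range n, ∑ y ∈ range n,
    (‖h (c+x+1) (d+y) - h (c+x) (d+y)‖ + ‖h (c+x) (d+y+1) - h (c+x) (d+y)‖)

theorem iso (n : ℕ) (A : ℕ → ℕ → Prop) (c d : ℕ) (F G : Finset (ℕ × ℕ))
    (hF' : ∀ p ∈ F, p.1 < n ∧ p.2 < n ∧ A (c+p.1) (d+p.2))
    (hG' : ∀ p ∈ G, p.1 < n ∧ p.2 < n ∧ ¬ A (c+p.1) (d+p.2)) :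
    (F.card : ℝ) ≤ (per (chi A) c d n)^2 ∨ (G.card : ℝ) ≤ (per (chi A) c d n)^2 := by
  classical
  set A' : ℕ → ℕ → Prop := fun x y => A (c+x) (d+y) with hA'
  set HE := (range n ×ˢ range n).filter (fun p => ¬ (A' p.1 p.2 ↔ A' (p.1+1) p.2)) with hHE
  set VE := (range n ×ˢ range n).filter (fun p => ¬ (A' p.1 p.2 ↔ A' p.1 (p.2+1))) with hVE
  have hper : per (chi A) c d n = ((HE.card + VE.card : ℕ) : ℝ) := by
    unfold per
    simp_rw [sum_add_distrib]
    push_cast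
    rw [hHE, hVE, card_filter, card_filter, sum_product, sum_product]
    push_cast
    congr 1
    · refine sum_congr rfl fun x _ => sum_congr rfl fun y _ => ?_
      rw [Real.norm_eq_abs, abs_sub_comm]
      rcases chi_abs A (c+x) (d+y) (c+x+1) (d+y) with ⟨h1, h2⟩ | ⟨h1, h2⟩
      · rw [h1, if_neg]; simpa [hA', add_assoc] using h2
      · rw [h1, if_pos]; simpa [hA', add_assoc] using h2
    · refine sum_congr rfl fun x _ => sum_congr rfl fun y _ => ?_
      rw [Real.norm_eq_abs, abs_sub_comm]
      rcases chi_abs A (c+x) (d+y) (c+x) (d+y+1) with ⟨h1, h2⟩ | ⟨h1, h2⟩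
      · rw [h1, if_neg]; simpa [hA', add_assoc] using h2
      · rw [h1, if_pos]; simpa [hA', add_assoc] using h2
  rw [hper]
  have := iso_aux n A' HE.card VE.card F G hF' hG' (HE.image Prod.snd) (VE.image Prod.fst)
    (by
      intro y hy h1 h2
      obtain ⟨x, hx, hs⟩ := exists_switch n (fun x => A' x y) h1 h2
      exact mem_image.2 ⟨(x,y), by simp [hHE, hx, hy]; simpa using hs, rfl⟩)
    (by
      intro x hx h1 h2
      obtain ⟨y, hy, hs⟩ := exists_switch n (fun y => A' x y) h1 h2
      exact mem_image.2 ⟨(x,y), by simp [hVE, hx, hy]; simpa using hs, rfl⟩)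
    card_image_le card_image_le
  exact_mod_cast this

theorem per_nonneg {E : Type*} [NormedAddCommGroup E] (h : ℕ → ℕ → E) (c d n : ℕ) :
    0 ≤ per h c d n := by unfold per; positivity

/-- number of separated pairs -/
theorem sep_bound (H : ℕ) (A : ℕ → ℕ → Prop) (c d : ℕ) :
    ∑ a ∈ range H, ∑ b ∈ range (2*H), |chi A (c+a) (d+b) - chi A (c+a+H) (d+b)|
      ≤ min ((per (chi A) c d (2*H))^2) (2*H*per (chi A) c d (2*H)) := by
  classical
  set n := 2*H with hn
  set B := (range n ×ˢ range n)
  set F := B.filter (fun p => A (c+p.1) (d+p.2)) with hF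
  set G := B.filter (fun p => ¬ A (c+p.1) (d+p.2)) with hG
  set Sp := (range H ×ˢ range n).filter (fun p => ¬ (A (c+p.1) (d+p.2) ↔ A (c+p.1+H) (d+p.2))) with hSp
  have hsum : ∑ a ∈ range H, ∑ b ∈ range n, |chi A (c+a) (d+b) - chi A (c+a+H) (d+b)| = (Sp.card : ℝ) := by
    rw [hSp, card_filter, sum_product]
    push_cast
    refine sum_congr rfl fun x _ => sum_congr rfl fun y _ => ?_
    rcases chi_abs A (c+x) (d+y) (c+x+H) (d+y) with ⟨h1, h2⟩ | ⟨h1, h2⟩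
    · rw [h1, if_neg]; simpa using h2
    · rw [h1, if_pos]; simpa using h2
  have hinj : ∀ (P : ℕ → ℕ → Prop) , (∀ p ∈ Sp, P p.1 p.2 ∨ P (p.1+H) p.2) →
      Sp.card ≤ (B.filter (fun p => P p.1 p.2)).card := by
    intro P hP
    apply card_le_card_of_injOn (fun p => if P p.1 p.2 then p else (p.1+H, p.2))
    · intro p hp
      have hp' := hP p hp
      simp only [hSp, coe_filter, mem_product, mem_range, Set.mem_ofPred_eq] at hp
      by_cases h : P p.1 p.2
      · simp [h, B]; omega
      · have := hp'.resolve_left h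
        simp [h, B, this]; omega
    · intro p hp q hq hpq
      simp only [hSp, coe_filter, mem_product, mem_range, Set.mem_ofPred_eq] at hp hq
      dsimp only at hpq
      split_ifs at hpq with h1 h2 h2
      · exact hpq
      · have := congrArg Prod.fst hpq; simp at this; omega
      · have := congrArg Prod.fst hpq; simp at this; omega
      · have e1 := congrArg Prod.fst hpq
        have e2 := congrArg Prod.snd hpq
        simp at e1 e2
        exact Prod.ext e1 e2
  have hSF : Sp.card ≤ F.card := by
    apply hinj (fun x y => A (c+x) (d+y))
    intro p hp
    simp only [hSp, mem_filter] at hp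
    have := hp.2
    rw [add_assoc] at this
    tauto
  have hSG : Sp.card ≤ G.card := by
    have := hinj (fun x y => ¬ A (c+x) (d+y)) (by
      intro p hp
      simp only [hSp, mem_filter] at hp
      have := hp.2
      rw [add_assoc] at this
      tauto)
    convert this
  have hS2 : Sp.card ≤ n*n := by
    have := card_le_card (filter_subset _ _ : F ⊆ B)
    simp only [B, card_product, card_range] at this
    exact hSF.trans this
  have h1 : (Sp.card : ℝ) ≤ (per (chi A) c d n)^2 := by
    rcases iso n A c d F G (by intro p hp; simp [hF, B] at hp; tauto) (by intro p hp; simp [hG, B] at hp; tauto) with h | h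
    · exact le_trans (by exact_mod_cast hSF) h
    · exact le_trans (by exact_mod_cast hSG) h
  rw [hsum]
  apply le_min h1
  have hp := per_nonneg (chi A) c d n
  have hnn : (n:ℝ) = 2 * H := by rw [hn]; push_cast; ring
  rw [← hnn]
  have hS2' : (Sp.card : ℝ) ≤ n*n := by exact_mod_cast hS2
  have hn0 : (0:ℝ) ≤ n := by positivity
  rcases le_total (per (chi A) c d n) n with h | h
  · nlinarith
  · nlinarith

def sg (b : Bool) : ℝ := if b then 1 else -1

theorem sg_mul_self (b : Bool) : sg b * sg b = 1 := by cases b <;> simp [sg]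

theorem sg_not (b : Bool) : sg (!b) = - sg b := by cases b <;> simp [sg]

theorem sg_orth {ι : Type*} [Fintype ι] [DecidableEq ι] (i j : ι) (hij : i ≠ j) :
    ∑ e : ι → Bool, sg (e i) * sg (e j) = 0 := by
  have hinv : Function.Involutive (fun e : ι → Bool => Function.update e i (!(e i))) := by
    intro e; funext k; by_cases hk : k = i
    · subst hk; simp
    · simp [hk]
  have := (Equiv.sum_comp hinv.toPerm (fun e : ι → Bool => sg (e i) * sg (e j)))
  simp only [Function.Involutive.coe_toPerm, Function.update_self, sg_not,
    Function.update_of_ne hij.symm, neg_mul, sum_neg_distrib] at this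
  linarith

theorem rad_sq {ι : Type*} [Fintype ι] [DecidableEq ι] (y : ι → ℝ) :
    ∑ e : ι → Bool, (∑ q, sg (e q) * y q)^2 = (Fintype.card (ι → Bool) : ℝ) * ∑ q, (y q)^2 := by
  have : ∀ e : ι → Bool, (∑ q, sg (e q) * y q)^2 =
      ∑ q, ∑ r, (y q * y r) * (sg (e q) * sg (e r)) := by
    intro e
    rw [sq, sum_mul_sum]
    refine sum_congr rfl fun q _ => sum_congr rfl fun r _ => by ring
  simp_rw [this]
  rw [sum_comm, mul_sum]
  refine sum_congr rfl fun q _ => ?_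
  rw [sum_comm, sum_eq_single q]
  · simp_rw [sg_mul_self]; simp; ring
  · intro r _ hr
    rw [← mul_sum, sg_orth q r hr.symm, mul_zero]
  · simp

theorem rad_abs {ι : Type*} [Fintype ι] [DecidableEq ι] (y : ι → ℝ) :
    (Fintype.card (ι → Bool) : ℝ)⁻¹ * ∑ e : ι → Bool, |∑ q, sg (e q) * y q| ≤
      Real.sqrt (∑ q, (y q)^2) := by
  have hc : (0:ℝ) < Fintype.card (ι → Bool) := by exact_mod_cast Fintype.card_pos
  apply Real.le_sqrt_of_sq_le
  have cs := sq_sum_le_card_mul_sum_sq (s := (univ : Finset (ι → Bool)))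
    (f := fun e => |∑ q, sg (e q) * y q|)
  simp_rw [sq_abs] at cs
  rw [rad_sq, card_univ] at cs
  rw [mul_pow, inv_pow, inv_mul_le_iff₀ (by positivity)]
  calc _ ≤ _ := cs
    _ = _ := by ring

/-- block decomposition of a range sum -/
theorem sum_blocks {E : Type*} [AddCommMonoid E] (M n : ℕ) (F : ℕ → E) :
    ∑ q : Fin M, ∑ a ∈ range n, F (q*n + a) = ∑ x ∈ range (M*n), F x := by
  rw [Fin.sum_univ_eq_sum_range (fun q => ∑ a ∈ range n, F (q*n+a))]
  induction M with
  | zero => simp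
  | succ k ih => rw [sum_range_succ, ih, Nat.succ_mul, sum_range_add]

theorem per_blocks {E : Type*} [NormedAddCommGroup E] (h : ℕ → ℕ → E) (M n : ℕ) :
    ∑ q : Fin M × Fin M, per h (q.1*n) (q.2*n) n = per h 0 0 (M*n) := by
  unfold per
  simp only [zero_add]
  rw [Fintype.sum_prod_type]
  rw [← sum_blocks]
  refine sum_congr rfl fun q _ => ?_
  rw [sum_comm]
  refine sum_congr rfl fun a _ => ?_
  rw [← sum_blocks]

/-- the average over signs for a given scale and offset -/
noncomputable def avgS {E : Type*} [NormedAddCommGroup E] [NormedSpace ℝ E]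
    (h : ℕ → ℕ → E) (M H a b : ℕ) : ℝ :=
  (Fintype.card (Fin M × Fin M → Bool) : ℝ)⁻¹ * ∑ e : Fin M × Fin M → Bool,
    ‖∑ q : Fin M × Fin M, sg (e q) • (h (q.1*(2*H) + a) (q.2*(2*H)+b) - h (q.1*(2*H) + a + H) (q.2*(2*H)+b))‖

theorem scale_bound (M H : ℕ) (hH : 0 < H) (A : ℕ → ℕ → Prop) :
    ∑ a ∈ range H, ∑ b ∈ range (2*H), avgS (chi A) M H a b ≤
      min ((per (chi A) 0 0 (M*(2*H)))^2) (2*H^2*Real.sqrt (per (chi A) 0 0 (M*(2*H)) / H)) := by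
  set P := per (chi A) 0 0 (M*(2*H)) with hP
  set y : ℕ → ℕ → Fin M × Fin M → ℝ := fun a b q =>
    chi A (q.1*(2*H) + a) (q.2*(2*H)+b) - chi A (q.1*(2*H) + a + H) (q.2*(2*H)+b) with hy
  set X : ℕ → ℕ → ℝ := fun a b => ∑ q, |y a b q| with hX
  have hX0 : ∀ a b, 0 ≤ X a b := fun a b => by positivity
  have hav : ∀ a b, avgS (chi A) M H a b ≤ Real.sqrt (X a b) := by
    intro a b
    have h1 := rad_abs (y a b)
    have h2 : ∑ q, (y a b q)^2 = X a b := by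
      refine sum_congr rfl fun q _ => ?_
      rcases chi_abs A (q.1*(2*H) + a) (q.2*(2*H)+b) (q.1*(2*H) + a + H) (q.2*(2*H)+b) with ⟨h, _⟩ | ⟨h, _⟩
      · rw [← sq_abs]; simp only [hy]; rw [h]; norm_num
      · rw [← sq_abs]; simp only [hy]; rw [h]; norm_num
    rw [h2] at h1
    exact h1
  have hXs : ∀ a b, Real.sqrt (X a b) ≤ X a b := by
    intro a b
    have : ∃ n : ℕ, X a b = n := by
      have : ∀ q, ∃ n : ℕ, |y a b q| = n := by
        intro q
        rcases chi_abs A (q.1*(2*H) + a) (q.2*(2*H)+b) (q.1*(2*H) + a + H) (q.2*(2*H)+b) with ⟨h, _⟩ | ⟨h, _⟩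
        · exact ⟨0, by simpa using h⟩
        · exact ⟨1, by simpa using h⟩
      choose n hn using this
      exact ⟨∑ q, n q, by simp [hX, hn]⟩
    obtain ⟨n, hn⟩ := this
    rw [hn]
    apply Real.sqrt_le_iff.2 ⟨by positivity, ?_⟩
    exact_mod_cast Nat.le_self_pow (by norm_num) n
  have hp : ∀ q : Fin M × Fin M, 0 ≤ per (chi A) (q.1*(2*H)) (q.2*(2*H)) (2*H) :=
    fun q => per_nonneg _ _ _ _
  have hPsum : ∑ q : Fin M × Fin M, per (chi A) (q.1*(2*H)) (q.2*(2*H)) (2*H) = P := per_blocks _ _ _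
  have hswap : ∑ a ∈ range H, ∑ b ∈ range (2*H), X a b =
      ∑ q : Fin M × Fin M, ∑ a ∈ range H, ∑ b ∈ range (2*H), |y a b q| := by
    simp only [hX]
    rw [sum_comm]
    simp_rw [sum_comm (s := range H)]
    rw [sum_comm]
  have hsep := fun q : Fin M × Fin M => sep_bound H A (q.1*(2*H)) (q.2*(2*H))
  have hT1 : ∑ a ∈ range H, ∑ b ∈ range (2*H), X a b ≤ P^2 := by
    rw [hswap]
    calc _ ≤ ∑ q : Fin M × Fin M, (per (chi A) (q.1*(2*H)) (q.2*(2*H)) (2*H))^2 :=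
          sum_le_sum fun q _ => (hsep q).trans (min_le_left _ _)
      _ ≤ _ := by
          rw [← hPsum]
          exact sum_sq_le_sq_sum_of_nonneg (fun i _ => hp i)
  have hT2 : ∑ a ∈ range H, ∑ b ∈ range (2*H), X a b ≤ 2*H*P := by
    rw [hswap]
    calc _ ≤ ∑ q : Fin M × Fin M, 2*H*(per (chi A) (q.1*(2*H)) (q.2*(2*H)) (2*H)) :=
          sum_le_sum fun q _ => (hsep q).trans (min_le_right _ _)
      _ = _ := by rw [← hPsum, mul_sum]
  have hH' : (0:ℝ) < H := by exact_mod_cast hH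
  have hP0 : 0 ≤ P := per_nonneg _ _ _ _
  apply le_min
  · refine le_trans (sum_le_sum fun a _ => sum_le_sum fun b _ => (hav a b).trans (hXs a b)) hT1
  · have h1 : ∑ a ∈ range H, ∑ b ∈ range (2*H), avgS (chi A) M H a b ≤
        ∑ p ∈ range H ×ˢ range (2*H), Real.sqrt (X p.1 p.2) := by
      rw [sum_product]
      exact sum_le_sum fun a _ => sum_le_sum fun b _ => hav a b
    refine h1.trans ?_
    have cs := sq_sum_le_card_mul_sum_sq (s := range H ×ˢ range (2*H))
      (f := fun p => Real.sqrt (X p.1 p.2))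
    simp_rw [Real.sq_sqrt (hX0 _ _)] at cs
    rw [sum_product (f := fun p => X p.1 p.2), card_product, card_range, card_range] at cs
    apply le_of_sq_le_sq _ (by positivity)
    refine cs.trans ?_
    rw [mul_pow, Real.sq_sqrt (by positivity)]
    push_cast
    calc (H*(2*H):ℝ) * _ ≤ (H*(2*H):ℝ) * (2*H*P) := by gcongr
      _ = _ := by field_simp

theorem geo_sqrt (k : ℕ) : ∑ i ∈ range k, Real.sqrt (2^i) ≤ 5/2 * Real.sqrt (2^k) := by
  induction k with
  | zero => norm_num
  | succ k ih =>
    rw [sum_range_succ, pow_succ, Real.sqrt_mul (by positivity)]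
    have h2 : (1.4:ℝ) ≤ Real.sqrt 2 := Real.le_sqrt_of_sq_le (by norm_num)
    nlinarith [Real.sqrt_nonneg ((2:ℝ)^k)]

theorem scales_sum (P : ℝ) (hP : 0 ≤ P) (K : ℕ) :
    ∑ i ∈ range K, min (P^2/2^i) (2*Real.sqrt (P*2^i)) ≤ 10 * P := by
  classical
  have hex : ∃ k : ℕ, P < 2^k := pow_unbounded_of_one_lt P (by norm_num)
  set k := Nat.find hex
  have hk : P < 2^k := Nat.find_spec hex
  have hA : ∑ i ∈ range k, 2*Real.sqrt (P*2^i) ≤ 8*P := by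
    rcases Nat.eq_zero_or_pos k with h0 | h0
    · rw [h0]; simpa using hP
    · have hk' : ¬ P < 2^(k-1) := Nat.find_min hex (by omega)
      push Not at hk'
      have h2k : (2:ℝ)^k ≤ 2*P := by
        have : (2:ℝ)^k = 2*2^(k-1) := by rw [← pow_succ']; congr 1; omega
        linarith
      simp_rw [Real.sqrt_mul hP]
      rw [← mul_sum, ← mul_sum]
      have h1 := geo_sqrt k
      have h3 : Real.sqrt P * Real.sqrt (2^k) ≤ 1.5 * P := by
        rw [← Real.sqrt_mul hP]
        apply Real.sqrt_le_iff.2 ⟨by positivity, ?_⟩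
        nlinarith
      nlinarith [Real.sqrt_nonneg P]
  have hB : ∀ j, ∑ i ∈ range (k+j), min (P^2/2^i) (2*Real.sqrt (P*2^i)) ≤
      8*P + 2*P^2/2^k*(1 - 1/2^j) := by
    intro j
    induction j with
    | zero =>
      simp only [add_zero, pow_zero, div_one, sub_self, mul_zero]
      exact le_trans (sum_le_sum fun i _ => min_le_right _ _) hA
    | succ j ih =>
      rw [← add_assoc, sum_range_succ]
      have := min_le_left (P^2/2^(k+j)) (2*Real.sqrt (P*2^(k+j)))
      have e : 2*P^2/2^k*(1 - 1/2^j) + P^2/2^(k+j) = 2*P^2/2^k*(1 - 1/2^(j+1)) := by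
        rw [pow_add, pow_succ]; field_simp; ring
      linarith
  have h1 : ∑ i ∈ range K, min (P^2/2^i) (2*Real.sqrt (P*2^i)) ≤
      ∑ i ∈ range (k+K), min (P^2/2^i) (2*Real.sqrt (P*2^i)) := by
    apply sum_le_sum_of_subset_of_nonneg
    · intro i hi; simp at hi ⊢; omega
    · intro i _ _; positivity
  have h2 : 2*P^2/2^k*(1 - 1/2^K) ≤ 2*P := by
    have h3 : 2*P^2/2^k ≤ 2*P := by
      rw [div_le_iff₀ (by positivity)]; nlinarith
    have h4 : (1:ℝ) - 1/2^K ≤ 1 := by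
      have : (0:ℝ) ≤ 1/2^K := by positivity
      linarith
    have h5 : 0 ≤ 2*P^2/2^k := by positivity
    nlinarith
  linarith [hB K]

noncomputable def Lhs {E : Type*} [NormedAddCommGroup E] [NormedSpace ℝ E]
    (K : ℕ) (h : ℕ → ℕ → E) : ℝ :=
  ∑ i ∈ range K, ((2:ℝ)^i)⁻¹ * ∑ a ∈ range (2^i), ∑ b ∈ range (2*2^i), avgS h (2^(K-1-i)) (2^i) a b

theorem sobolev_set (K : ℕ) (A : ℕ → ℕ → Prop) :
    Lhs K (chi A) ≤ 10 * per (chi A) 0 0 (2^K) := by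
  refine le_trans ?_ (scales_sum _ (per_nonneg _ _ _ _) K)
  refine sum_le_sum fun i hi => ?_
  have hi' : i < K := by simpa using hi
  have h := scale_bound (2^(K-1-i)) (2^i) (by positivity) A
  have e : 2^(K-1-i) * (2*2^i) = 2^K := by
    rw [← pow_succ', ← pow_add]; congr 1; omega
  rw [e] at h
  set P := per (chi A) 0 0 (2^K)
  have hP0 : 0 ≤ P := per_nonneg _ _ _ _
  push_cast at h
  have hH : (0:ℝ) < 2^i := by positivity
  rw [inv_mul_le_iff₀ hH]
  refine h.trans ?_
  rw [mul_min_of_nonneg _ _ hH.le]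
  apply min_le_min
  · rw [mul_div_cancel₀ _ hH.ne']
  · have : P * 2^i = (2^i)^2 * (P / 2^i) := by field_simp
    rw [this, Real.sqrt_mul (by positivity), Real.sqrt_sq hH.le]
    apply le_of_eq; ring

theorem sobolev_gen {E : Type*} [NormedAddCommGroup E] [NormedSpace ℝ E] {Ω : Type*}
    [MeasurableSpace Ω] (ν : Measure Ω) (K : ℕ) (h : ℕ → ℕ → E) (G : ℕ → ℕ → Ω → ℝ)
    (hGint : ∀ x y, x ≤ 2^K → y ≤ 2^K → Integrable (G x y) ν)
    (ha : ∀ (M H a b : ℕ) (e : Fin M × Fin M → Bool), M * (2 * H) = 2^K → a < H → b < 2*H → 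
      ‖∑ q : Fin M × Fin M, sg (e q) • (h (q.1*(2*H) + a) (q.2*(2*H)+b) -
        h (q.1*(2*H) + a + H) (q.2*(2*H)+b))‖ ≤
      ∫ ω, |∑ q : Fin M × Fin M, sg (e q) * (G (q.1*(2*H) + a) (q.2*(2*H)+b) ω -
        G (q.1*(2*H) + a + H) (q.2*(2*H)+b) ω)| ∂ν)
    (hb : ∀ x y x' y', x ≤ 2^K → y ≤ 2^K → x' ≤ 2^K → y' ≤ 2^K →
      ∫ ω, |G x y ω - G x' y' ω| ∂ν ≤ ‖h x y - h x' y'‖)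
    (hω : ∀ ω, Lhs K (fun x y => G x y ω) ≤ 10 * per (fun x y => G x y ω) 0 0 (2^K)) :
    Lhs K h ≤ 10 * per h 0 0 (2^K) := by
  have bnd : ∀ (M H a : ℕ) (q : Fin M), M * (2*H) = 2^K → a < 2*H → q*(2*H)+a ≤ 2^K := by
    intro M H a q e ha
    have : ((q:ℕ)+1)*(2*H) ≤ M*(2*H) := Nat.mul_le_mul_right _ q.2
    rw [← e]; nlinarith
  have blk : ∀ i, i < K → 2^(K-1-i) * (2*2^i) = 2^K := by
    intro i hi
    rw [← pow_succ', ← pow_add]; congr 1; omega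
  have intL : ∀ (M H a b : ℕ) (e : Fin M × Fin M → Bool), M * (2 * H) = 2^K → a < H → b < 2*H → 
      Integrable (fun ω => ‖∑ q : Fin M × Fin M, sg (e q) • (G (q.1*(2*H) + a) (q.2*(2*H)+b) ω -
        G (q.1*(2*H) + a + H) (q.2*(2*H)+b) ω)‖) ν := by
    intro M H a b e he haH hbH
    apply Integrable.norm
    apply integrable_finsetSum
    intro q _
    refine Integrable.smul (sg (e q)) (f := fun ω => G (q.1*(2*H) + a) (q.2*(2*H)+b) ω -
        G (q.1*(2*H) + a + H) (q.2*(2*H)+b) ω) ?_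
    apply Integrable.sub
    · exact hGint _ _ (bnd M H _ _ he (by omega)) (bnd M H _ _ he (by omega))
    · rw [add_assoc]; exact hGint _ _ (bnd M H _ _ he (by omega)) (bnd M H _ _ he (by omega))
  have h1 : Lhs K h ≤ ∫ ω, Lhs K (fun x y => G x y ω) ∂ν := by
    unfold Lhs avgS
    rw [integral_finsetSum]
    · refine sum_le_sum fun i hi => ?_
      have hi' : i < K := by simpa using hi
      rw [integral_const_mul]
      gcongr
      rw [integral_finsetSum]
      · refine sum_le_sum fun a ha' => ?_
        rw [integral_finsetSum]
        · refine sum_le_sum fun b hb' => ?_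
          rw [integral_const_mul]
          gcongr
          rw [integral_finsetSum]
          · refine sum_le_sum fun e _ => ?_
            exact ha _ _ a b e (blk i hi') (by simpa using ha') (by simpa using hb')
          · intro e _
            exact intL _ _ _ _ _ (blk i hi') (by simpa using ha') (by simpa using hb')
        · intro b hb'
          apply Integrable.const_mul
          apply integrable_finsetSum
          intro e _
          exact intL _ _ _ _ _ (blk i hi') (by simpa using ha') (by simpa using hb')
      · intro a ha'
        apply integrable_finsetSum
        intro b hb'
        apply Integrable.const_mul
        apply integrable_finsetSum
        intro e _
        exact intL _ _ _ _ _ (blk i hi') (by simpa using ha') (by simpa using hb')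
    · intro i hi
      have hi' : i < K := by simpa using hi
      apply Integrable.const_mul
      apply integrable_finsetSum
      intro a ha'
      apply integrable_finsetSum
      intro b hb'
      apply Integrable.const_mul
      apply integrable_finsetSum
      intro e _
      exact intL _ _ _ _ _ (blk i hi') (by simpa using ha') (by simpa using hb')
  have intD : ∀ x y x' y', x ≤ 2^K → y ≤ 2^K → x' ≤ 2^K → y' ≤ 2^K →
      Integrable (fun ω => ‖G x y ω - G x' y' ω‖) ν := by
    intro x y x' y' h1 h2 h3 h4
    exact ((hGint _ _ h1 h2).sub (hGint _ _ h3 h4)).norm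
  have intR2 : ∀ x ∈ range (2^K), ∀ y ∈ range (2^K), Integrable (fun ω => 
      (‖G (0+x+1) (0+y) ω - G (0+x) (0+y) ω‖ + ‖G (0+x) (0+y+1) ω - G (0+x) (0+y) ω‖)) ν := by
    intro x hx y hy
    simp at hx hy
    exact (intD _ _ _ _ (by omega) (by omega) (by omega) (by omega)).add 
      (intD _ _ _ _ (by omega) (by omega) (by omega) (by omega))
  have intR : Integrable (fun ω => per (fun x y => G x y ω) 0 0 (2^K)) ν := by
    unfold per
    exact integrable_finsetSum _ fun x hx => integrable_finsetSum _ fun y hy => intR2 x hx y hy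
  have intLL : Integrable (fun ω => Lhs K (fun x y => G x y ω)) ν := by
    unfold Lhs avgS
    apply integrable_finsetSum
    intro i hi
    have hi' : i < K := by simpa using hi
    apply Integrable.const_mul
    apply integrable_finsetSum
    intro a ha'
    apply integrable_finsetSum
    intro b hb'
    apply Integrable.const_mul
    apply integrable_finsetSum
    intro e _
    exact intL _ _ _ _ _ (blk i hi') (by simpa using ha') (by simpa using hb')
  have h2 : ∫ ω, Lhs K (fun x y => G x y ω) ∂ν ≤ ∫ ω, 10 * per (fun x y => G x y ω) 0 0 (2^K) ∂ν :=
    integral_mono intLL (intR.const_mul _) hω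
  have h3 : ∫ ω, 10 * per (fun x y => G x y ω) 0 0 (2^K) ∂ν ≤ 10 * per h 0 0 (2^K) := by
    rw [integral_const_mul]
    gcongr
    unfold per
    rw [integral_finsetSum _ fun x hx => integrable_finsetSum _ fun y hy => intR2 x hx y hy]
    refine sum_le_sum fun x hx => ?_
    rw [integral_finsetSum _ fun y hy => intR2 x hx y hy]
    refine sum_le_sum fun y hy => ?_
    simp only [mem_range] at hx hy
    rw [integral_add (intD _ _ _ _ (by omega) (by omega) (by omega) (by omega))
      (intD _ _ _ _ (by omega) (by omega) (by omega) (by omega))]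
    exact add_le_add (hb _ _ _ _ (by omega) (by omega) (by omega) (by omega)) 
      (hb _ _ _ _ (by omega) (by omega) (by omega) (by omega))
  exact h1.trans (h2.trans h3)

theorem sobolev_real (K : ℕ) (h : ℕ → ℕ → ℝ) : Lhs K h ≤ 10 * per h 0 0 (2^K) := by
  obtain ⟨B, hB⟩ : ∃ B : ℝ, ∀ x y, x ≤ 2^K → y ≤ 2^K → |h x y| ≤ B := by
    refine ⟨∑ x ∈ range (2^K+1), ∑ y ∈ range (2^K+1), |h x y|, fun x y hx hy => ?_⟩
    calc |h x y| ≤ ∑ y ∈ range (2^K+1), |h x y| :=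
          single_le_sum (f := fun y => |h x y|) (fun _ _ => abs_nonneg _) (by simp; omega)
      _ ≤ _ := single_le_sum (f := fun x => ∑ y ∈ range (2^K+1), |h x y|)
          (fun _ _ => sum_nonneg fun _ _ => abs_nonneg _) (by simp; omega)
  set ν := (volume : Measure ℝ).restrict (Set.Icc (-B) B) with hν
  set G : ℕ → ℕ → ℝ → ℝ := fun x y t => chi (fun x y => t < h x y) x y with hG
  have hGi : ∀ x y, G x y = Set.indicator (Set.Iio (h x y)) (fun _ => (1:ℝ)) := by
    intro x y
    funext t
    simp [hG, chi, Set.indicator]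
  have hGint : ∀ x y, Integrable (G x y) ν := by
    intro x y
    rw [hGi]
    exact (integrable_const (1:ℝ)).indicator measurableSet_Iio
  have hval : ∀ x y, x ≤ 2^K → y ≤ 2^K → ∫ t, G x y t ∂ν = h x y + B := by
    intro x y hx hy
    have hb := abs_le.1 (hB x y hx hy)
    rw [hGi, integral_indicator measurableSet_Iio, hν, Measure.restrict_restrict measurableSet_Iio]
    have : Set.Iio (h x y) ∩ Set.Icc (-B) B = Set.Ico (-B) (h x y) := by
      ext t; simp; constructor
      · rintro ⟨h1, h2, h3⟩; exact ⟨h2, h1⟩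
      · rintro ⟨h1, h2⟩; exact ⟨h2, h1, by linarith⟩
    rw [this, setIntegral_const]
    simp [Measure.real, Real.volume_Ico]

    linarith
  apply sobolev_gen ν K h G (fun x y _ _ => hGint x y)
  · intro M H a b e he ha hb
    have bnd : ∀ (a : ℕ) (q : Fin M), a < 2*H → q*(2*H)+a ≤ 2^K := by
      intro a q ha
      have : ((q:ℕ)+1)*(2*H) ≤ M*(2*H) := Nat.mul_le_mul_right _ q.2
      rw [← he]; nlinarith
    have : ∑ q : Fin M × Fin M, sg (e q) • (h (q.1*(2*H) + a) (q.2*(2*H)+b) -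
        h (q.1*(2*H) + a + H) (q.2*(2*H)+b)) = ∫ ω, ∑ q : Fin M × Fin M, sg (e q) * (G (q.1*(2*H) + a) (q.2*(2*H)+b) ω -
        G (q.1*(2*H) + a + H) (q.2*(2*H)+b) ω) ∂ν := by
      rw [integral_finsetSum]
      · refine sum_congr rfl fun q _ => ?_
        rw [integral_const_mul, integral_sub (hGint _ _) (hGint _ _), hval, hval, smul_eq_mul]
        · ring
        · rw [add_assoc]; exact bnd _ _ (by omega)
        · exact bnd _ _ (by omega)
        · exact bnd _ _ (by omega)
        · exact bnd _ _ (by omega)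
      · intro q _
        exact ((hGint _ _).sub (hGint _ _)).const_mul _
    rw [this]
    exact norm_integral_le_integral_norm _
  · have key : ∀ x y x' y', x ≤ 2^K → y ≤ 2^K → x' ≤ 2^K → y' ≤ 2^K → h x y ≤ h x' y' →
        ∫ ω, |G x y ω - G x' y' ω| ∂ν ≤ ‖h x y - h x' y'‖ := by
      intro x y x' y' h1 h2 h3 h4 hle
      have : ∀ ω, |G x y ω - G x' y' ω| = G x' y' ω - G x y ω := by
        intro ω
        simp only [hG, chi]
        by_cases c1 : ω < h x y
        · simp [c1, lt_of_lt_of_le c1 hle]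
        · by_cases c2 : ω < h x' y' <;> simp [c1, c2]
      simp_rw [this]
      rw [integral_sub (hGint _ _) (hGint _ _), hval _ _ h1 h2, hval _ _ h3 h4, Real.norm_eq_abs, abs_sub_comm]
      refine le_trans (le_of_eq ?_) (le_abs_self _)
      ring
    intro x y x' y' h1 h2 h3 h4
    rcases le_total (h x y) (h x' y') with hle | hle
    · exact key _ _ _ _ h1 h2 h3 h4 hle
    · rw [norm_sub_rev]
      simp_rw [abs_sub_comm (G x y _)]
      exact key _ _ _ _ h3 h4 h1 h2 hle
  · intro t
    exact sobolev_set K (fun x y => t < h x y)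

theorem sobolev_L1 {Ω : Type*} [MeasurableSpace Ω] (ν : Measure Ω) (K : ℕ) (h : ℕ → ℕ → Lp ℝ 1 ν) :
    Lhs K h ≤ 10 * per h 0 0 (2^K) := by
  apply sobolev_gen ν K h (fun x y => (h x y : Ω → ℝ)) (fun x y _ _ => L1.integrable_coeFn _)
  · intro M H a b e he ha hb
    rw [L1.norm_eq_integral_norm]
    apply le_of_eq
    apply integral_congr_ae
    have h1 := Lp.coeFn_finsetSum (p := 1) (μ := ν) (univ : Finset (Fin M × Fin M)) (fun q => 
      sg (e q) • (h (q.1*(2*H) + a) (q.2*(2*H)+b) -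
        h (q.1*(2*H) + a + H) (q.2*(2*H)+b)))
    have h2 : ∀ᵐ ω ∂ν, ∀ q : Fin M × Fin M, 
      (sg (e q) • (h (q.1*(2*H) + a) (q.2*(2*H)+b) -
        h (q.1*(2*H) + a + H) (q.2*(2*H)+b)) : Lp ℝ 1 ν) ω = 
      sg (e q) * (h (q.1*(2*H) + a) (q.2*(2*H)+b) ω -
        h (q.1*(2*H) + a + H) (q.2*(2*H)+b) ω) := by
      rw [ae_all_iff]
      intro q
      filter_upwards [Lp.coeFn_smul (sg (e q)) (h (q.1*(2*H) + a) (q.2*(2*H)+b) -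
        h (q.1*(2*H) + a + H) (q.2*(2*H)+b)), Lp.coeFn_sub (h (q.1*(2*H) + a) (q.2*(2*H)+b))
        (h (q.1*(2*H) + a + H) (q.2*(2*H)+b))] with ω e1 e2
      rw [e1, Pi.smul_apply, e2, Pi.sub_apply, smul_eq_mul]
    filter_upwards [h1, h2] with ω e1 e2
    rw [e1, Real.norm_eq_abs]
    simp only [Finset.sum_apply, e2]
  · intro x y x' y' _ _ _ _
    rw [L1.norm_eq_integral_norm]
    apply le_of_eq
    apply integral_congr_ae
    filter_upwards [Lp.coeFn_sub (h x y) (h x' y')] with ω e1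
    rw [e1, Real.norm_eq_abs, Pi.sub_apply]
  · intro ω
    exact sobolev_real K _

section Lin
variable {V : Type*} [Fintype V] [DecidableEq V] {E : Type*} [NormedAddCommGroup E] [NormedSpace ℝ E]

def toM {L : ℕ} (u : V → Fin L) : Multiset V := ∑ v, (u v : ℕ) • ({v} : Multiset V)

omit [DecidableEq V] in
theorem toM_card {L : ℕ} (u : V → Fin L) : (toM u).card ≤ Fintype.card V * L := by
  unfold toM
  rw [Multiset.card_sum]
  simp only [Multiset.card_nsmul, Multiset.card_singleton, smul_eq_mul, mul_one]
  calc _ ≤ ∑ _v : V, L := sum_le_sum fun v _ => (u v).2.le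
    _ = _ := by simp

noncomputable def avgM (L : ℕ) (φ : Multiset V → E) : E :=
  (Fintype.card (V → Fin L) : ℝ)⁻¹ • ∑ u : V → Fin L, φ (toM u)

theorem avgM_sub (L : ℕ) (φ ψ : Multiset V → E) :
    avgM L (fun z => φ z - ψ z) = avgM L φ - avgM L ψ := by
  unfold avgM; rw [sum_sub_distrib, smul_sub]

theorem avgM_norm (L : ℕ) (φ : Multiset V → E) (B : ℝ) (hB : 0 ≤ B)
    (h : ∀ z : Multiset V, z.card ≤ Fintype.card V * L → ‖φ z‖ ≤ B) : ‖avgM L φ‖ ≤ B := by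
  unfold avgM
  rw [norm_smul, norm_inv, Real.norm_natCast]
  have h1 : ‖∑ u : V → Fin L, φ (toM u)‖ ≤ (Fintype.card (V → Fin L) : ℝ) * B := by
    refine (norm_sum_le _ _).trans ?_
    calc _ ≤ ∑ _u : V → Fin L, B := sum_le_sum fun u _ => h _ (toM_card u)
      _ = _ := by simp
  rcases Nat.eq_zero_or_pos (Fintype.card (V → Fin L)) with h0 | h0
  · rw [h0]; simpa using hB
  · rw [inv_mul_le_iff₀ (by exact_mod_cast h0)]; exact h1

theorem avgM_mono (L : ℕ) (φ ψ : Multiset V → ℝ)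
    (h : ∀ z : Multiset V, z.card ≤ Fintype.card V * L → φ z ≤ ψ z) : avgM L φ ≤ avgM L ψ := by
  unfold avgM
  rw [smul_eq_mul, smul_eq_mul]
  gcongr with u
  exact h _ (toM_card u)

theorem avgM_const (L : ℕ) (hL : 0 < L) (c : E) : avgM (V := V) L (fun _ => c) = c := by
  have : Nonempty (V → Fin L) := ⟨fun _ => ⟨0, hL⟩⟩
  have : (Fintype.card (V → Fin L) : ℝ) ≠ 0 := by
    exact_mod_cast Fintype.card_ne_zero
  unfold avgM
  rw [sum_const, card_univ, ← Nat.cast_smul_eq_nsmul ℝ, smul_smul, inv_mul_cancel₀ this, one_smul]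

theorem avgM_shift1 (R : ℕ) (hR : 0 < R) (φ : Multiset V → E) (B : ℝ) (v : V)
    (h : ∀ z : Multiset V, z.card ≤ Fintype.card V * R + 1 → ‖φ z‖ ≤ B) :
    ‖avgM R (fun z => φ (v ::ₘ z)) - avgM R φ‖ ≤ 2 * B / R := by
  have : Nonempty (V → Fin R) := ⟨fun _ => ⟨0, hR⟩⟩
  rw [← avgM_sub]
  unfold avgM
  set W := {j : V // j ≠ v}
  have hcard : Fintype.card (V → Fin R) = R * Fintype.card (W → Fin R) := by
    rw [Fintype.card_congr (Equiv.funSplitAt v (Fin R)), Fintype.card_prod, Fintype.card_fin]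
  rw [← (Equiv.funSplitAt v (Fin R)).symm.sum_comp, Fintype.sum_prod_type, sum_comm]
  set r : (W → Fin R) → Multiset V := fun w => ∑ j : W, (w j : ℕ) • ({j.1} : Multiset V)
  have hM : ∀ i w, toM ((Equiv.funSplitAt v (Fin R)).symm (i, w)) = (i:ℕ) • {v} + r w := by
    intro i w
    unfold toM
    rw [← Finset.add_sum_erase _ _ (mem_univ v)]
    congr 1
    · simp [Equiv.funSplitAt, Equiv.piSplitAt]
    · rw [Finset.sum_subtype (p := fun j => j ≠ v) (univ.erase v) (by simp)]
      refine sum_congr rfl fun j _ => ?_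
      simp [Equiv.funSplitAt, Equiv.piSplitAt, j.2]
  have hrow : ∀ w : W → Fin R, ‖∑ i : Fin R, (φ (v ::ₘ toM ((Equiv.funSplitAt v (Fin R)).symm (i, w)))
      - φ (toM ((Equiv.funSplitAt v (Fin R)).symm (i, w))))‖ ≤ 2 * B := by
    intro w
    set ψ : ℕ → E := fun i => φ (i • {v} + r w)
    have e : ∀ i : Fin R, φ (v ::ₘ toM ((Equiv.funSplitAt v (Fin R)).symm (i, w)))
      - φ (toM ((Equiv.funSplitAt v (Fin R)).symm (i, w))) = ψ (i+1) - ψ i := by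
      intro i
      rw [hM]
      simp only [ψ]
      congr 2
      rw [add_smul, one_smul, ← Multiset.singleton_add]; abel
    simp_rw [e]
    rw [Fin.sum_univ_eq_sum_range (fun i => ψ (i+1) - ψ i), sum_range_sub]
    have hlast : ∀ i : Fin R, ‖ψ i‖ ≤ B ∧ ‖ψ (i+1)‖ ≤ B := by
      intro i
      have hc := toM_card ((Equiv.funSplitAt v (Fin R)).symm (i, w))
      rw [hM] at hc
      constructor
      · apply h; omega
      · apply h
        rw [add_smul, one_smul, add_right_comm, Multiset.card_add]
        simp only [Multiset.card_singleton]; omega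
    have h0 := (hlast ⟨0, hR⟩).1
    have h1 := (hlast ⟨R-1, by omega⟩).2
    simp only at h0 h1
    rw [Nat.sub_add_cancel hR] at h1
    calc _ ≤ ‖ψ R‖ + ‖ψ 0‖ := norm_sub_le _ _
      _ ≤ _ := by linarith
  rw [norm_smul, norm_inv, Real.norm_natCast, hcard]
  have hWpos : (0:ℝ) < Fintype.card (W → Fin R) := by
    have : Nonempty (W → Fin R) := ⟨fun _ => ⟨0, hR⟩⟩
    exact_mod_cast Fintype.card_pos
  have hR' : (0:ℝ) < R := by exact_mod_cast hR
  push_cast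
  rw [inv_mul_le_iff₀ (by positivity)]
  calc _ ≤ ∑ w : W → Fin R, ‖∑ i : Fin R, (φ (v ::ₘ toM ((Equiv.funSplitAt v (Fin R)).symm (i, w)))
      - φ (toM ((Equiv.funSplitAt v (Fin R)).symm (i, w))))‖ := norm_sum_le _ _
    _ ≤ ∑ _w : W → Fin R, 2*B := sum_le_sum fun w _ => hrow w
    _ = _ := by simp; field_simp

theorem avgM_shift (R : ℕ) (hR : 0 < R) (φ : Multiset V → E) (B : ℝ) (y : Multiset V)
    (h : ∀ z : Multiset V, z.card ≤ Fintype.card V * R + y.card → ‖φ z‖ ≤ B) :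
    ‖avgM R (fun z => φ (z + y)) - avgM R φ‖ ≤ y.card * (2 * B / R) := by
  induction y using Multiset.induction_on with
  | empty => simp
  | cons v y ih =>
    have ih' := ih (fun z hz => h z (by rw [Multiset.card_cons]; omega))
    have h1 := avgM_shift1 R hR (fun z => φ (z + y)) B v (fun z hz => by
      apply h; rw [Multiset.card_add, Multiset.card_cons]; omega)
    have e : (fun z => φ (z + v ::ₘ y)) = (fun z => φ (v ::ₘ z + y)) := by
      funext z; rw [Multiset.add_cons, Multiset.cons_add]
    rw [e, Multiset.card_cons]
    push_cast
    calc _ ≤ _ := norm_sub_le_norm_sub_add_norm_sub _ (avgM R (fun z => φ (z + y))) _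
      _ ≤ _ := by linarith

/-- smoothing -/
noncomputable def Fs (L : ℕ) (g : Multiset V → E) (x : Multiset V) : E := avgM L (fun u => g (u + x))

noncomputable def hs (L : ℕ) (g : Multiset V → E) (x : Multiset V) (v : V) : E :=
  Fs L g (v ::ₘ x) - Fs L g x

variable (g : Multiset V → E) (s L : ℕ) (b : ℝ) (hb : 0 ≤ b)
  (hg : ∀ n v, n.card + 1 ≤ s → ‖g (v ::ₘ n) - g n‖ ≤ b)

include hg in
omit [Fintype V] [DecidableEq V] [NormedSpace ℝ E] in
theorem g_shift (n y : Multiset V) (h : n.card + y.card ≤ s) : ‖g (y + n) - g n‖ ≤ y.card * b := by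
  induction y using Multiset.induction_on with
  | empty => simp
  | cons v y ih =>
    rw [Multiset.card_cons] at h ⊢
    have h1 := ih (by omega)
    have h2 := hg (y + n) v (by rw [Multiset.card_add]; omega)
    rw [Multiset.cons_add]
    push_cast
    calc _ ≤ _ := norm_sub_le_norm_sub_add_norm_sub _ (g (y + n)) _
      _ ≤ _ := by linarith

include hg hb in
theorem Fs_step (n : Multiset V) (v : V) (h : Fintype.card V * L + n.card + 1 ≤ s) :
    ‖Fs L g (v ::ₘ n) - Fs L g n‖ ≤ b := by
  unfold Fs
  rw [← avgM_sub]
  apply avgM_norm _ _ _ hb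
  intro z hz
  rw [Multiset.add_cons]
  apply hg
  rw [Multiset.card_add]; omega

include hg hb in
theorem Fs_close (hL : 0 < L) (n : Multiset V) (h : Fintype.card V * L + n.card ≤ s) :
    ‖Fs L g n - g n‖ ≤ Fintype.card V * L * b := by
  unfold Fs
  rw [← avgM_const (V := V) L hL (g n), ← avgM_sub]
  apply avgM_norm _ _ _ (by positivity)
  intro z hz
  refine (g_shift g s b hg n z (by omega)).trans ?_
  gcongr
  exact_mod_cast hz

include hg hb in
/-- approximate linearity -/
theorem Fs_lin (hL : 0 < L) (n y : Multiset V) (h : Fintype.card V * L + n.card + y.card ≤ s) :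
    ‖Fs L g (y + n) - Fs L g n - (y.map (hs L g n)).sum‖ ≤ y.card * (y.card * (2 * b / L)) := by
  induction y using Multiset.induction_on with
  | empty => simp
  | cons v y ih =>
    rw [Multiset.card_cons] at h
    have ih' := ih (by omega)
    have h1 := avgM_shift L hL (fun u => g (v ::ₘ (u + n)) - g (u + n)) b y (by
      intro z hz
      apply hg
      rw [Multiset.card_add]; omega)
    have e1 : avgM L (fun u => g (v ::ₘ (u + n)) - g (u + n)) = hs L g n v := by
      rw [avgM_sub]
      simp only [hs, Fs, Multiset.add_cons]
    have e2 : avgM L (fun z => g (v ::ₘ (z + y + n)) - g (z + y + n)) =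
        Fs L g (v ::ₘ y + n) - Fs L g (y + n) := by
      rw [avgM_sub]
      simp only [Fs, Multiset.add_cons, Multiset.cons_add, add_assoc]
    rw [e1, e2] at h1
    rw [Multiset.map_cons, Multiset.sum_cons, Multiset.card_cons]
    have e3 : Fs L g (v ::ₘ y + n) - Fs L g n - (hs L g n v + (y.map (hs L g n)).sum) =
      (Fs L g (v ::ₘ y + n) - Fs L g (y + n) - hs L g n v) +
      (Fs L g (y + n) - Fs L g n - (y.map (hs L g n)).sum) := by abel
    rw [e3]
    refine (norm_add_le _ _).trans ?_
    have hq : 0 ≤ 2 * b / L := by positivity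
    have hy : (0:ℝ) ≤ y.card := by positivity
    push_cast
    nlinarith

include hg hb in
theorem Fs_shift (n y : Multiset V) (h : Fintype.card V * L + n.card + y.card ≤ s) :
    ‖Fs L g (y + n) - Fs L g n‖ ≤ y.card * b :=
  g_shift (Fs L g) (s - Fintype.card V * L) b (fun n v hn => Fs_step g s L b hb hg n v (by omega))
    n y (by omega)

include hg hb in
theorem linearize (hL : 0 < L) (R T : ℕ) (hR : 0 < R) (hT : 0 < T) (S S' : Multiset V) (q : ℕ)
    (hS : S.card = q) (hS' : S'.card = q) (low : ℝ)
    (hcap : Fintype.card V * R + Fintype.card V * L + (T + 1) * q ≤ s)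
    (hlow : ∀ n : Multiset V, n.card + T * q ≤ s → low ≤ ‖g (T • S + n) - g (T • S' + n)‖) :
    low / T - 2 * (Fintype.card V * L * b) / T - T * q * (2 * (2 * q * b) / R) - 2 * (q * (q * (2 * b / L)))
      ≤ avgM R (fun x => ‖(S.map (hs L g x)).sum - (S'.map (hs L g x)).sum‖) := by
  have hT' : (0:ℝ) < T := by exact_mod_cast hT
  have hTq : T * q + q ≤ (T+1)*q := by ring_nf; omega
  set φ : Multiset V → ℝ := fun x => ‖Fs L g (S + x) - Fs L g (S' + x)‖ with hφ
  have hφB : ∀ z : Multiset V, Fintype.card V*L + z.card + q ≤ s → ‖φ z‖ ≤ 2*q*b := by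
    intro z hz
    have h1 := Fs_shift g s L b hb hg z S (by omega)
    have h2 := Fs_shift g s L b hb hg z S' (by omega)
    rw [hS] at h1
    rw [hS'] at h2
    rw [hφ, norm_norm]
    have h3 := norm_sub_le_norm_sub_add_norm_sub (Fs L g (S + z)) (Fs L g z) (Fs L g (S' + z))
    rw [norm_sub_rev (Fs L g z)] at h3
    linarith
  -- step 4
  have h4 : avgM R φ ≤ avgM R (fun x => ‖(S.map (hs L g x)).sum - (S'.map (hs L g x)).sum‖)
      + 2 * (q * (q * (2 * b / L))) := by
    have : avgM R φ - avgM R (fun x => ‖(S.map (hs L g x)).sum - (S'.map (hs L g x)).sum‖)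
        ≤ avgM (V := V) R (fun _ => 2 * (q * (q * (2 * b / L)))) := by
      rw [← avgM_sub]
      apply avgM_mono
      intro z hz
      have h1 := Fs_lin g s L b hb hg hL z S (by omega)
      have h2 := Fs_lin g s L b hb hg hL z S' (by omega)
      rw [hS] at h1
      rw [hS'] at h2
      have h3 : Fs L g (S + z) - Fs L g (S' + z) =
        (Fs L g (S + z) - Fs L g z - (S.map (hs L g z)).sum) -
        (Fs L g (S' + z) - Fs L g z - (S'.map (hs L g z)).sum) +
        ((S.map (hs L g z)).sum - (S'.map (hs L g z)).sum) := by abel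
      simp only [hφ]
      rw [h3]
      have h5 := norm_add_le ((Fs L g (S + z) - Fs L g z - (S.map (hs L g z)).sum) -
        (Fs L g (S' + z) - Fs L g z - (S'.map (hs L g z)).sum))
        ((S.map (hs L g z)).sum - (S'.map (hs L g z)).sum)
      have h6 := norm_sub_le (Fs L g (S + z) - Fs L g z - (S.map (hs L g z)).sum)
        (Fs L g (S' + z) - Fs L g z - (S'.map (hs L g z)).sum)
      linarith
    rw [avgM_const R hR] at this
    linarith
  -- step 3
  have h3 : ∀ t ∈ range T, avgM R (fun x => φ (x + (t • S + (T-1-t) • S'))) ≤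
      avgM R φ + T * q * (2 * (2 * q * b) / R) := by
    intro t ht
    simp only [mem_range] at ht
    have hc : (t • S + (T-1-t) • S').card = (T-1) * q := by
      rw [Multiset.card_add, Multiset.card_nsmul, Multiset.card_nsmul, hS, hS', ← add_mul]
      congr 1; omega
    have hc2 : (T-1)*q ≤ T*q := Nat.mul_le_mul_right _ (by omega)
    have := avgM_shift R hR φ (2*q*b) (t • S + (T-1-t) • S') (by
      intro z hz
      apply hφB
      rw [hc] at hz
      omega)
    rw [hc] at this
    have h5 := (le_abs_self _).trans this
    have h6 : (((T-1)*q : ℕ) : ℝ) ≤ T * q := by exact_mod_cast hc2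
    have h7 : (((T-1)*q : ℕ) : ℝ) * (2 * (2 * q * b) / R) ≤ T * q * (2 * (2 * q * b) / R) := by
      gcongr
    linarith
  -- steps 1,2
  have h12 : ∀ x : Multiset V, x.card ≤ Fintype.card V * R → low - 2 * (Fintype.card V * L * b) ≤
      ∑ t ∈ range T, φ (x + (t • S + (T-1-t) • S')) := by
    intro x hx
    have cS : (T • S + x).card = T * q + x.card := by
      rw [Multiset.card_add, Multiset.card_nsmul, hS]
    have cS' : (T • S' + x).card = T * q + x.card := by
      rw [Multiset.card_add, Multiset.card_nsmul, hS']
    have a1 := hlow x (by omega)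
    have a2 := Fs_close g s L b hb hg hL (T • S + x) (by omega)
    have a3 := Fs_close g s L b hb hg hL (T • S' + x) (by omega)
    have a4 : g (T • S + x) - g (T • S' + x) = (Fs L g (T • S + x) - Fs L g (T • S' + x)) -
      ((Fs L g (T • S + x) - g (T • S + x)) - (Fs L g (T • S' + x) - g (T • S' + x))) := by abel
    rw [a4] at a1
    have a5 := norm_sub_le (Fs L g (T • S + x) - Fs L g (T • S' + x))
      ((Fs L g (T • S + x) - g (T • S + x)) - (Fs L g (T • S' + x) - g (T • S' + x)))
    have a6 := norm_sub_le (Fs L g (T • S + x) - g (T • S + x)) (Fs L g (T • S' + x) - g (T • S' + x))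
    have a7 : ‖Fs L g (T • S + x) - Fs L g (T • S' + x)‖ ≤ ∑ t ∈ range T, φ (x + (t • S + (T-1-t) • S')) := by
      have tel := sum_range_sub (fun t => Fs L g (t • S + (T-t) • S' + x)) T
      simp only [Nat.sub_self, zero_smul, add_zero, zero_add, Nat.sub_zero] at tel
      rw [← tel]
      refine (norm_sum_le _ _).trans (sum_le_sum fun t ht => ?_)
      simp only [mem_range] at ht
      apply le_of_eq
      simp only [hφ]
      congr 3
      · rw [show T - (t+1) = T-1-t by omega, add_smul, one_smul]; abel
      · rw [show T - t = (T-1-t) + 1 by omega, add_smul, one_smul]; abel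
    linarith
  have h5 : low - 2 * (Fintype.card V * L * b) ≤ ∑ t ∈ range T, avgM R (fun x => φ (x + (t • S + (T-1-t) • S'))) := by
    have : avgM (V := V) R (fun _ => low - 2 * (Fintype.card V * L * b)) ≤
        avgM R (fun x => ∑ t ∈ range T, φ (x + (t • S + (T-1-t) • S'))) := avgM_mono _ _ _ h12
    rw [avgM_const R hR] at this
    refine this.trans (le_of_eq ?_)
    unfold avgM
    rw [sum_comm, ← smul_sum]
  have h6 : low - 2 * (Fintype.card V * L * b) ≤ T * (avgM R φ + T * q * (2 * (2 * q * b) / R)) := by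
    refine h5.trans ((sum_le_sum h3).trans (le_of_eq ?_))
    rw [sum_const, card_range, nsmul_eq_mul]
  have h7 : low / T - 2 * (Fintype.card V * L * b) / T ≤ avgM R φ + T * q * (2 * (2 * q * b) / R) := by
    rw [← sub_div, div_le_iff₀ hT']
    linarith
  linarith
end Lin

section Geo

abbrev PP := EuclideanSpace ℝ (Fin 2)

theorem emd_le {S T : Finset PP} {B : ℝ} {s : ℕ} (hS : S.card = s) (hT : T.card = s)
    (h : ∀ φ : PP → ℝ, LipschitzWith 1 φ → |∑ x ∈ S, φ x - ∑ x ∈ T, φ x| ≤ B) :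
    emdUnif S T ≤ B / s := by
  unfold emdUnif
  apply csSup_le
  · exact ⟨_, fun _ => 0, LipschitzWith.const' 0, rfl⟩
  · rintro c ⟨φ, hφ, rfl⟩
    rw [hS, hT, ← sub_div, abs_div, Nat.abs_cast]
    gcongr
    exact h φ hφ

theorem le_emd {S T : Finset PP} {s : ℕ} (hS : S.card = s) (hT : T.card = s)
    (φ : PP → ℝ) (hφ : LipschitzWith 1 φ) :
    (∑ x ∈ S, φ x - ∑ x ∈ T, φ x) / s ≤ emdUnif S T := by
  unfold emdUnif
  refine (le_abs_self _).trans (le_csSup ?_ ⟨φ, hφ, by rw [hS, hT, sub_div]⟩)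
  refine ⟨(∑ x ∈ S, ‖x‖ + ∑ x ∈ T, ‖x‖) / s, ?_⟩
  rintro c ⟨ψ, hψ, rfl⟩
  rw [hS, hT, ← sub_div, abs_div, Nat.abs_cast]
  gcongr
  have key : ∀ U : Finset PP, |∑ x ∈ U, (ψ x - ψ 0)| ≤ ∑ x ∈ U, ‖x‖ := by
    intro U
    refine (abs_sum_le_sum_abs _ _).trans (sum_le_sum fun x _ => ?_)
    have := hψ.dist_le_mul x 0
    simpa [Real.dist_eq] using this
  have e : ∑ x ∈ S, ψ x - ∑ x ∈ T, ψ x = ∑ x ∈ S, (ψ x - ψ 0) - ∑ x ∈ T, (ψ x - ψ 0) := by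
    rw [sum_sub_distrib, sum_sub_distrib, sum_const, sum_const, hS, hT]; ring
  rw [e]
  exact (abs_sub _ _).trans (add_le_add (key S) (key T))

variable {W : Type*} [DecidableEq W]

theorem enum_cons (w : W) (m : Multiset W) :
    (w ::ₘ m).toEnumFinset = insert (w, m.count w) m.toEnumFinset := by
  ext ⟨a, i⟩
  simp only [Multiset.mem_toEnumFinset, mem_insert, Prod.mk.injEq, Multiset.count_cons]
  by_cases h : a = w
  · subst h; simp; omega
  · simp [h]

variable (pt : W × ℕ ↪ PP)

def cfg (m : Multiset W) : Finset PP := m.toEnumFinset.map pt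

theorem cfg_card (m : Multiset W) : (cfg pt m).card = m.card := by
  simp [cfg]

theorem cfg_sum_cons (w : W) (m : Multiset W) (φ : PP → ℝ) :
    ∑ z ∈ cfg pt (w ::ₘ m), φ z = φ (pt (w, m.count w)) + ∑ z ∈ cfg pt m, φ z := by
  unfold cfg
  rw [enum_cons, sum_map, sum_map, sum_insert]
  simp

variable (base : W → PP) (hbase : ∀ w i, dist (pt (w, i)) (base w) ≤ 1/8)

include hbase in
theorem cfg_emd_cons (v w : W) (m : Multiset W) (s : ℕ) (hs : m.card + 1 = s) :
    emdUnif (cfg pt (v ::ₘ m)) (cfg pt (w ::ₘ m)) ≤ (dist (base v) (base w) + 1/4) / s := by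
  apply emd_le (by rw [cfg_card, Multiset.card_cons, hs]) (by rw [cfg_card, Multiset.card_cons, hs])
  intro φ hφ
  rw [cfg_sum_cons, cfg_sum_cons, add_sub_add_right_eq_sub]
  have h := hφ.dist_le_mul (pt (v, m.count v)) (pt (w, m.count w))
  rw [Real.dist_eq] at h
  have h1 := hbase v (m.count v)
  have h2 := hbase w (m.count w)
  have h3 := dist_triangle4_right (pt (v, m.count v)) (pt (w, m.count w)) (base v) (base w)
  simp only [NNReal.coe_one, one_mul] at h
  linarith

include hbase in
theorem cfg_sum_add (S n : Multiset W) (φ : PP → ℝ) (hφ : LipschitzWith 1 φ) :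
    |∑ z ∈ cfg pt (S + n), φ z - ∑ z ∈ cfg pt n, φ z - (S.map (fun w => φ (base w))).sum| ≤ S.card * (1/8) := by
  induction S using Multiset.induction_on with
  | empty => simp
  | cons w S ih =>
    rw [Multiset.cons_add, cfg_sum_cons, Multiset.map_cons, Multiset.sum_cons, Multiset.card_cons]
    have h := hφ.dist_le_mul (pt (w, (S+n).count w)) (base w)
    rw [Real.dist_eq] at h
    have h1 := hbase w ((S+n).count w)
    simp only [NNReal.coe_one, one_mul] at h
    have h2 := h.trans h1
    rw [abs_le] at *
    push_cast
    constructor <;> linarith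

include hbase in
theorem cfg_emd_low (S S' n : Multiset W) (k s : ℕ) (hS : S.card = k) (hS' : S'.card = k)
    (hn : n.card + k = s) (H : ℝ) (hH : ∀ v ∈ S, ∀ w ∈ S', H ≤ dist (base v) (base w)) (hk : 0 < k) :
    (k * (H - 1/4)) / s ≤ emdUnif (cfg pt (S + n)) (cfg pt (S' + n)) := by
  set A : Set PP := {z | ∃ w ∈ S', base w = z}
  have hA : A.Nonempty := by
    obtain ⟨w, hw⟩ := Multiset.card_pos_iff_exists_mem.1 (hS'.symm ▸ hk)
    exact ⟨_, w, hw, rfl⟩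
  have hφ : LipschitzWith 1 (fun z => Metric.infDist z A) := Metric.lipschitz_infDist_pt A
  have h1 := cfg_sum_add pt base hbase S n _ hφ
  have h2 := cfg_sum_add pt base hbase S' n _ hφ
  refine le_trans ?_ (le_emd (s := s) (by rw [cfg_card, Multiset.card_add, hS, ← hn, add_comm])
    (by rw [cfg_card, Multiset.card_add, hS', ← hn, add_comm]) _ hφ)
  gcongr
  have h3 : (S.map (fun w => Metric.infDist (base w) A)).sum ≥ k * H := by
    have := Multiset.card_nsmul_le_sum (s := S.map (fun w => Metric.infDist (base w) A)) (a := H) (by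
      intro x hx
      obtain ⟨v, hv, rfl⟩ := Multiset.mem_map.1 hx
      rw [Metric.le_infDist hA]
      rintro _ ⟨w, hw, rfl⟩
      exact hH v hv w hw)
    rw [Multiset.card_map, hS, nsmul_eq_mul] at this
    exact this
  have h4 : (S'.map (fun w => Metric.infDist (base w) A)).sum = 0 := by
    apply Multiset.sum_eq_zero
    intro x hx
    obtain ⟨v, hv, rfl⟩ := Multiset.mem_map.1 hx
    exact Metric.infDist_zero_of_mem ⟨v, hv, rfl⟩
  rw [h4, hS', abs_le] at h2
  rw [hS, abs_le] at h1
  linarith [h1.1, h2.2]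

end Geo

section G2

variable {V : Type*} [DecidableEq V] (pt : Option V × ℕ ↪ PP) (base : Option V → PP)
  (hbase : ∀ w i, dist (pt (w, i)) (base w) ≤ 1/8) {E : Type*} [NormedAddCommGroup E]
  (s : ℕ) (F : Finset PP → E) (D : ℝ) (hD : 0 ≤ D)
  (hF1 : ∀ S T : Finset PP, S.card = s → T.card = s → emdUnif S T ≤ ‖F S - F T‖)
  (hF2 : ∀ S T : Finset PP, S.card = s → T.card = s → ‖F S - F T‖ ≤ D * emdUnif S T)

def fill (n : Multiset V) : Multiset (Option V) := n.map some + Multiset.replicate (s - n.card) none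

def gg (n : Multiset V) : E := F (cfg pt (fill s n))

include hbase hF2 hD in
theorem gg_adj (v w : V) (n : Multiset V) (hn : n.card + 1 ≤ s) :
    ‖gg pt s F (v ::ₘ n) - gg pt s F (w ::ₘ n)‖ ≤ D * ((dist (base (some v)) (base (some w)) + 1/4) / s) := by
  have e : ∀ v, fill s (v ::ₘ n) = some v ::ₘ (n.map some + Multiset.replicate (s - (n.card + 1)) none) := by
    intro v; simp [fill]
  have hc : (n.map some + Multiset.replicate (s - (n.card + 1)) (none : Option V)).card + 1 = s := by
    simp; omega
  unfold gg
  rw [e, e]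
  refine (hF2 _ _ (by rw [cfg_card, Multiset.card_cons, hc]) (by rw [cfg_card, Multiset.card_cons, hc])).trans ?_
  gcongr
  exact cfg_emd_cons pt base hbase _ _ _ s hc

include hbase hF2 hD in
theorem gg_step (v : V) (n : Multiset V) (hn : n.card + 1 ≤ s) :
    ‖gg pt s F (v ::ₘ n) - gg pt s F n‖ ≤ D * ((dist (base (some v)) (base none) + 1/4) / s) := by
  have e : fill s (v ::ₘ n) = some v ::ₘ (n.map some + Multiset.replicate (s - (n.card + 1)) none) := by
    simp [fill]
  have e' : fill s n = none ::ₘ (n.map some + Multiset.replicate (s - (n.card + 1)) none) := by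
    rw [← Multiset.add_cons, ← Multiset.replicate_succ, fill]
    congr 2; omega
  have hc : (n.map some + Multiset.replicate (s - (n.card + 1)) (none : Option V)).card + 1 = s := by
    simp; omega
  unfold gg
  rw [e, e']
  refine (hF2 _ _ (by rw [cfg_card, Multiset.card_cons, hc]) (by rw [cfg_card, Multiset.card_cons, hc])).trans ?_
  gcongr
  exact cfg_emd_cons pt base hbase _ _ _ s hc

include hbase hF1 in
theorem gg_low (S S' n : Multiset V) (T q : ℕ) (hS : S.card = q) (hS' : S'.card = q) (hT : 0 < T) (hq : 0 < q)
    (hn : n.card + T * q ≤ s) (H : ℝ)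
    (hH : ∀ v ∈ S, ∀ w ∈ S', H ≤ dist (base (some v)) (base (some w))) :
    ((T * q : ℕ) * (H - 1/4)) / s ≤ ‖gg pt s F (T • S + n) - gg pt s F (T • S' + n)‖ := by
  have e : ∀ S : Multiset V, S.card = q → fill s (T • S + n) = (T • S).map some +
      (n.map some + Multiset.replicate (s - (T * q + n.card)) none) := by
    intro S hS
    simp only [fill, Multiset.map_add, Multiset.card_add, Multiset.card_nsmul, hS, add_assoc]
  have hc : (n.map some + Multiset.replicate (s - (T * q + n.card)) (none : Option V)).card + T * q = s := by
    simp; omega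
  have hk : ∀ S : Multiset V, S.card = q → ((T • S).map (some : V → Option V)).card = T * q := by
    intro S hS; simp [hS]
  have hm : ∀ (S : Multiset V) w, w ∈ (T • S).map (some : V → Option V) → ∃ v ∈ S, some v = w := by
    intro S w hw
    obtain ⟨v, hv, rfl⟩ := Multiset.mem_map.1 hw
    exact ⟨v, Multiset.mem_of_mem_nsmul hv, rfl⟩
  unfold gg
  rw [e S hS, e S' hS']
  refine le_trans ?_ (hF1 _ _ ?_ ?_)
  · apply cfg_emd_low pt base hbase _ _ _ _ s (hk S hS) (hk S' hS') hc H ?_ (by positivity)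
    intro v hv w hw
    obtain ⟨v', hv', rfl⟩ := hm _ _ hv
    obtain ⟨w', hw', rfl⟩ := hm _ _ hw
    exact hH v' hv' w' hw'
  · rw [cfg_card, Multiset.card_add, hk S hS, add_comm, hc]
  · rw [cfg_card, Multiset.card_add, hk S' hS', add_comm, hc]
end G2

section Grid
variable (m : ℕ)

def bx : Option (Fin (m+1) × Fin (m+1)) → ℤ
  | none => -1
  | some v => (v.1 : ℕ)

def byy : Option (Fin (m+1) × Fin (m+1)) → ℤ
  | none => 0
  | some v => (v.2 : ℕ)

noncomputable def off (i : ℕ) : ℝ := (1/8) * (1 - 1 / ((i:ℝ)+1))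

theorem off_nonneg (i : ℕ) : 0 ≤ off i := by
  have : 1 / ((i:ℝ)+1) ≤ 1 := by
    rw [div_le_one (by positivity)]; linarith [(Nat.cast_nonneg i : (0:ℝ) ≤ i)]
  unfold off; linarith

theorem off_le (i : ℕ) : off i ≤ 1/8 := by
  have : 0 ≤ 1 / ((i:ℝ)+1) := by positivity
  unfold off; linarith

theorem off_inj {i j : ℕ} (h : off i = off j) : i = j := by
  unfold off at h
  have h1 : 1 / ((i:ℝ)+1) = 1 / ((j:ℝ)+1) := by linarith
  have hi : (i:ℝ)+1 ≠ 0 := by positivity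
  have hj : (j:ℝ)+1 ≠ 0 := by positivity
  field_simp at h1
  have : (i:ℝ) = j := by linarith
  exact_mod_cast this

noncomputable def gbase (o : Option (Fin (m+1) × Fin (m+1))) : PP := !₂[(bx m o : ℝ), (byy m o : ℝ)]

noncomputable def gpt : Option (Fin (m+1) × Fin (m+1)) × ℕ ↪ PP where
  toFun p := !₂[(bx m p.1 : ℝ) + off p.2, (byy m p.1 : ℝ)]
  inj' := by
    rintro ⟨o, i⟩ ⟨o', j⟩ h
    have h0 : (bx m o : ℝ) + off i = (bx m o' : ℝ) + off j := by
      have := congrArg (fun z : PP => z 0) h; simpa using this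
    have h1 : (byy m o : ℝ) = byy m o' := by
      have := congrArg (fun z : PP => z 1) h; simpa using this
    have h1' : byy m o = byy m o' := by exact_mod_cast h1
    have hb : bx m o = bx m o' := by
      have f1 : ∀ o i, ⌊(bx m o : ℝ) + off i⌋ = bx m o := by
        intro o i
        rw [Int.floor_eq_iff]
        constructor <;> linarith [off_nonneg i, off_le i]
      rw [← f1 o i, h0, f1]
    rw [hb] at h0
    have hij : i = j := off_inj (by linarith)
    subst hij
    have : o = o' := by
      rcases o with _ | ⟨v1, v2⟩ <;> rcases o' with _ | ⟨w1, w2⟩ <;> simp only [bx, byy] at hb h1'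
      · rfl
      · omega
      · omega
      · congr 2 <;> ext <;> omega
    rw [this]

theorem dist_PP_le (x y : PP) : dist x y ≤ |x 0 - y 0| + |x 1 - y 1| := by
  rw [EuclideanSpace.dist_eq, Fin.sum_univ_two, Real.sqrt_le_iff]
  refine ⟨by positivity, ?_⟩
  rw [Real.dist_eq, Real.dist_eq]
  nlinarith [abs_nonneg (x 0 - y 0), abs_nonneg (x 1 - y 1)]

theorem le_dist_PP (x y : PP) (k : Fin 2) : |x k - y k| ≤ dist x y := by
  rw [dist_eq_norm]
  exact PiLp.norm_apply_le (x - y) k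

theorem gbase_close (w) (i : ℕ) : dist (gpt m (w, i)) (gbase m w) ≤ 1/8 := by
  refine (dist_PP_le _ _).trans ?_
  change |((bx m w : ℝ) + off i) - (bx m w : ℝ)| + |(byy m w : ℝ) - (byy m w : ℝ)| ≤ 1/8
  rw [add_sub_cancel_left, sub_self, abs_zero, add_zero]
  rw [abs_of_nonneg (off_nonneg i)]
  linarith [off_le i]

theorem gbase_none (v : Fin (m+1) × Fin (m+1)) : dist (gbase m (some v)) (gbase m none) ≤ 2 * m + 1 := by
  refine (dist_PP_le _ _).trans ?_
  have h1 : ((v.1:ℕ):ℝ) ≤ m := by exact_mod_cast Nat.lt_succ_iff.1 v.1.2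
  have h2 : ((v.2:ℕ):ℝ) ≤ m := by exact_mod_cast Nat.lt_succ_iff.1 v.2.2
  simp [gbase, bx, byy]
  rw [abs_of_nonneg (by positivity)]
  linarith

end Grid
section Scale
variable (K : ℕ)

abbrev VV := Fin (2^K+1) × Fin (2^K+1)

def vx (i j : ℕ) : VV K := (Fin.ofNat _ i, Fin.ofNat _ j)

theorem vx_base (i j : ℕ) (hi : i ≤ 2^K) (hj : j ≤ 2^K) : gbase (2^K) (some (vx K i j)) = !₂[(i:ℝ), (j:ℝ)] := by
  have e1 : i % (2^K+1) = i := Nat.mod_eq_of_lt (by omega)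
  have e2 : j % (2^K+1) = j := Nat.mod_eq_of_lt (by omega)
  simp only [gbase, vx, bx, byy, Fin.val_ofNat, e1, e2, Int.cast_natCast]

theorem vx_adj (i j i' j' : ℕ) (hi : i ≤ 2^K) (hj : j ≤ 2^K) (hi' : i' ≤ 2^K) (hj' : j' ≤ 2^K)
    (h : |(i:ℝ) - i'| + |(j:ℝ) - j'| ≤ 1) :
    dist (gbase (2^K) (some (vx K i j))) (gbase (2^K) (some (vx K i' j'))) ≤ 1 := by
  rw [vx_base K i j hi hj, vx_base K i' j' hi' hj']
  refine (dist_PP_le _ _).trans ?_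
  simpa using h

variable (M H a b : ℕ) (e : Fin M × Fin M → Bool)

/-- The position of the mass in block `q`. -/
def pv (q : Fin M × Fin M) : VV K :=
  if e q then vx K (q.1*(2*H)+a) (q.2*(2*H)+b) else vx K (q.1*(2*H)+a+H) (q.2*(2*H)+b)

theorem two_cases (n n' H a c c' : ℕ) (hn : n ≠ n') (hc : c = 0 ∨ c = H) (hc' : c' = 0 ∨ c' = H) :
    (H:ℝ) ≤ |((n*(2*H)+a+c : ℕ):ℝ) - ((n'*(2*H)+a+c' : ℕ):ℝ)| := by
  wlog h : n' < n generalizing n n' c c'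
  · rw [abs_sub_comm]
    exact this n' n c' c hn.symm hc' hc (by omega)
  refine le_trans ?_ (le_abs_self _)
  rw [le_sub_iff_add_le]
  have h1 : (n'+1)*(2*H) ≤ n*(2*H) := Nat.mul_le_mul_right _ h
  rw [add_mul] at h1
  have : H + (n'*(2*H)+a+c') ≤ n*(2*H)+a+c := by omega
  exact_mod_cast this

theorem pv_sep (hMH : M * (2*H) = 2^K) (ha : a < H) (hb : b < 2*H) (q q' : Fin M × Fin M) :
    (H:ℝ) ≤ dist (gbase (2^K) (some (pv K M H a b e q))) (gbase (2^K) (some (pv K M H a b (fun q => !e q) q'))) := by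
  have bd : ∀ n : Fin M, (n:ℕ) * (2*H) + 2*H ≤ 2^K := by
    intro n
    rw [← hMH, ← Nat.succ_mul]
    exact Nat.mul_le_mul_right _ n.2
  have key : ∀ e : Fin M × Fin M → Bool, ∀ q, ∃ c, (c = 0 ∨ c = H) ∧ (c = 0 ↔ (e q = true ∨ H = 0)) ∧
    gbase (2^K) (some (pv K M H a b e q)) = !₂[((q.1*(2*H)+a+c : ℕ) : ℝ), ((q.2*(2*H)+b : ℕ):ℝ)] := by
    intro e q
    have h1 := bd q.1
    have h2 := bd q.2
    by_cases he : e q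
    · refine ⟨0, by simp, by simp [he], ?_⟩
      rw [pv, if_pos he, vx_base _ _ _ (by omega) (by omega)]; rfl
    · refine ⟨H, by simp, by simp [he], ?_⟩
      rw [pv, if_neg he, vx_base _ _ _ (by omega) (by omega)]
  obtain ⟨c, hc, hc2, h1⟩ := key e q
  obtain ⟨c', hc', hc2', h2⟩ := key (fun q => !e q) q'
  rw [h1, h2]
  by_cases hx : (q.1:ℕ) = q'.1
  · by_cases hy : (q.2:ℕ) = q'.2
    · have hqq : q = q' := by ext <;> assumption
      subst hqq
      refine le_trans ?_ (le_dist_PP _ _ 0)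
      simp only [Bool.not_eq_true', Nat.pos_iff_ne_zero.1 (lt_of_le_of_lt (Nat.zero_le _) ha), or_false] at hc2 hc2'
      have : (c = 0 ∧ c' = H) ∨ (c = H ∧ c' = 0) := by
        cases he : e q <;> simp [he] at hc2 hc2' <;> omega
      rcases this with ⟨rfl, rfl⟩ | ⟨rfl, rfl⟩ <;> simp
    · refine le_trans ?_ (le_dist_PP _ _ 1)
      exact two_cases q.2 q'.2 H b 0 0 hy (by simp) (by simp)
  · refine le_trans ?_ (le_dist_PP _ _ 0)
    exact two_cases q.1 q'.1 H a c c' hx hc hc'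

end Scale

section Comb

theorem avgM_sum {V : Type*} [Fintype V] [DecidableEq V] {ι : Type*} (t : Finset ι) (L : ℕ) (φ : ι → Multiset V → ℝ) :
    avgM L (fun z => ∑ i ∈ t, φ i z) = ∑ i ∈ t, avgM L (φ i) := by
  unfold avgM
  rw [sum_comm, smul_sum]

theorem avgM_mul {V : Type*} [Fintype V] [DecidableEq V] (L : ℕ) (c : ℝ) (φ : Multiset V → ℝ) :
    avgM L (fun z => c * φ z) = c * avgM L φ := by
  unfold avgM
  rw [← mul_sum, smul_eq_mul, smul_eq_mul]; ring

theorem err_bound (m q N H s b : ℝ) (hm : 2 ≤ m) (hq1 : 1 ≤ q) (hq : q ≤ m^2) (hN0 : 0 ≤ N) (hN : N ≤ 4*m^2)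
    (hH : 1 ≤ H) (hs : 0 < s) (hb0 : 0 ≤ b) (hb : b ≤ 4*m^2/s) :
    q * H / (2*s) ≤ (m^27*q*(H-1/4)/s) / m^27 - 2*(N * m^14 * b)/m^27 - m^27*q*(2*(2*q*b)/m^41)
      - 2 * (q * (q * (2*b/m^14))) := by
  have hm0 : 0 < m := by linarith
  have h8 : (256:ℝ) ≤ m^8 := by
    calc (256:ℝ) = 2^8 := by norm_num
      _ ≤ m^8 := by gcongr
  have h9 : (512:ℝ) ≤ m^9 := by
    calc (512:ℝ) = 2^9 := by norm_num
      _ ≤ m^9 := by gcongr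
  have hq0 : 0 ≤ q := by linarith
  have t1 : 2*(N * m^14 * b)/m^27 ≤ 1/12/s := by
    calc _ ≤ 2*((4*m^2) * m^14 * (4*m^2/s))/m^27 := by gcongr
      _ = 32 / m^9 / s := by field_simp; norm_num
      _ ≤ 1/12/s := by
        apply div_le_div_of_nonneg_right _ hs.le
        rw [div_le_div_iff₀ (by positivity) (by norm_num)]; linarith
  have t2 : m^27*q*(2*(2*q*b)/m^41) ≤ 1/12/s := by
    calc _ ≤ m^27*m^2*(2*(2*m^2*(4*m^2/s))/m^41) := by gcongr
      _ = 16 / m^8 / s := by field_simp; norm_num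
      _ ≤ 1/12/s := by
        apply div_le_div_of_nonneg_right _ hs.le
        rw [div_le_div_iff₀ (by positivity) (by norm_num)]; linarith
  have t3 : 2 * (q * (q * (2*b/m^14))) ≤ 1/12/s := by
    calc _ ≤ 2 * (m^2 * (m^2 * (2*(4*m^2/s)/m^14))) := by gcongr
      _ = 16 / m^8 / s := by field_simp; norm_num
      _ ≤ 1/12/s := by
        apply div_le_div_of_nonneg_right _ hs.le
        rw [div_le_div_iff₀ (by positivity) (by norm_num)]; linarith
  have t0 : (m^27*q*(H-1/4)/s) / m^27 = q*(H-1/4)/s := by field_simp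
  have t4 : q * H / (2*s) + 1/4/s ≤ q*(H-1/4)/s := by
    have : q * H / (2*s) + 1/4/s = (q*H/2 + 1/4)/s := by field_simp
    rw [this]
    gcongr
    nlinarith
  have t5 : 1/12/s + 1/12/s+1/12/s = 1/4/s := by ring
  rw [t0]; linarith

variable (K : ℕ) {E : Type*} [NormedAddCommGroup E] [NormedSpace ℝ E]
  (s : ℕ) (F : Finset PP → E) (D : ℝ)

noncomputable abbrev G0 : Multiset (VV K) → E := gg (gpt (2^K)) s F

noncomputable def hh (L : ℕ) (x : Multiset (VV K)) (i j : ℕ) : E := hs L (G0 K s F) x (vx K i j)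

variable (hK : 1 ≤ K) (hD : 0 ≤ D) (hDm : D ≤ 2^K) (hs47 : (2^K)^47 ≤ s)
  (hF1 : ∀ S T : Finset PP, S.card = s → T.card = s → emdUnif S T ≤ ‖F S - F T‖)
  (hF2 : ∀ S T : Finset PP, S.card = s → T.card = s → ‖F S - F T‖ ≤ D * emdUnif S T)

include hs47 hK in
omit [NormedSpace ℝ E] in
theorem cap (q : ℕ) (hq : q ≤ (2^K)^2) :
    Fintype.card (VV K) * (2^K)^41 + Fintype.card (VV K) * (2^K)^14 + ((2^K)^27 + 1) * q ≤ s := by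
  refine le_trans ?_ hs47
  have hm : 2 ≤ 2^K := by
    calc 2 = 2^1 := rfl
      _ ≤ 2^K := Nat.pow_le_pow_right (by norm_num) hK
  simp only [Fintype.card_prod, Fintype.card_fin]
  generalize 2^K = m at *
  have h1 : (m+1)*(m+1) ≤ m^4 := by
    calc (m+1)*(m+1) ≤ (m*m)*(m*m) := by gcongr <;> nlinarith
      _ = m^4 := by ring
  have h2 : m^14 ≤ m^41 := Nat.pow_le_pow_right (by omega) (by norm_num)
  have h3 : (m^27+1) ≤ m^28 := by
    have : 1 ≤ m^27 := Nat.one_le_pow _ _ (by omega)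
    calc m^27+1 ≤ m^27*2 := by omega
      _ ≤ m^27*m := by gcongr
      _ = m^28 := by ring
  have h5 : m^30 ≤ m^46 := Nat.pow_le_pow_right (by omega) (by norm_num)
  calc _ ≤ m^4*m^41 + m^4*m^41 + m^28 * m^2 := by gcongr
    _ = m^45*2 + m^30 := by ring
    _ ≤ m^45*m + m^46 := by gcongr
    _ = m^46*2 := by ring
    _ ≤ m^46*m := by gcongr
    _ = m^47 := by ring

include hs47 hK hF1 hF2 hD hDm in
theorem scale_low (i a b : ℕ) (hi : i < K) (ha : a < 2^i) (hb : b < 2*2^i) (M : ℕ) (hM : M = 2^(K-1-i))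
    (e : Fin M × Fin M → Bool) :
    ((M:ℝ)^2 * 2^i : ℝ) / (2*s) ≤ avgM ((2^K)^41) (fun x =>
      ‖∑ q : Fin M × Fin M, sg (e q) •
        (hh K s F ((2^K)^14) x (q.1*(2*2^i)+a) (q.2*(2*2^i)+b) -
          hh K s F ((2^K)^14) x (q.1*(2*2^i)+a+2^i) (q.2*(2*2^i)+b))‖) := by
  have hMH : M * (2*2^i) = 2^K := by
    rw [hM, ← pow_succ', ← pow_add]; congr 1; omega
  have hm : (2:ℝ) ≤ 2^K := by
    calc (2:ℝ) = 2^1 := by norm_num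
      _ ≤ 2^K := pow_le_pow_right₀ (by norm_num) hK
  have hs0 : (0:ℝ) < s := by
    have : 0 < (2^K)^47 := by positivity
    exact_mod_cast lt_of_lt_of_le this hs47
  set S : Multiset (VV K) := univ.val.map (pv K M (2^i) a b e) with hSd
  set S' : Multiset (VV K) := univ.val.map (pv K M (2^i) a b (fun q => !e q)) with hSd'
  have cardU : (univ : Finset (Fin M × Fin M)).card = M^2 := by simp [sq]
  have hS : S.card = M^2 := by rw [hSd, Multiset.card_map]; exact cardU
  have hS' : S'.card = M^2 := by rw [hSd', Multiset.card_map]; exact cardU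
  have hML : M ≤ 2^K := hM ▸ Nat.pow_le_pow_right (by norm_num) (by omega)
  have hM1 : 1 ≤ M := hM ▸ Nat.one_le_pow _ _ (by norm_num)
  set b' : ℝ := D * ((2*(2:ℝ)^K + 1 + 1/4)/s) with hb'
  have hb'0 : 0 ≤ b' := by positivity
  have hstep : ∀ (n : Multiset (VV K)) v, n.card + 1 ≤ s → ‖G0 K s F (v ::ₘ n) - G0 K s F n‖ ≤ b' := by
    intro n v hn
    refine (gg_step (gpt (2^K)) (gbase (2^K)) (gbase_close _) s F D hD hF2 v n hn).trans ?_
    rw [hb']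
    gcongr
    exact_mod_cast gbase_none (2^K) v
  have hlow := linearize (G0 K s F) s ((2^K)^14) b' hb'0 hstep (by positivity) ((2^K)^41) ((2^K)^27)
    (by positivity) (by positivity) S S' (M^2) hS hS'
    ((((2^K)^27 * M^2 : ℕ) * (((2^i:ℕ):ℝ) - 1/4)) / s)
    (cap K s hK hs47 _ (by gcongr))
    (fun n hn => gg_low (gpt (2^K)) (gbase (2^K)) (gbase_close _) s F hF1 S S' n ((2^K)^27) (M^2) hS hS'
      (by positivity) (by positivity) hn (2^i:ℕ) (by
        intro v hv w hw
        obtain ⟨q, -, rfl⟩ := Multiset.mem_map.1 hv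
        obtain ⟨q', -, rfl⟩ := Multiset.mem_map.1 hw
        exact pv_sep K M (2^i) a b e hMH ha hb q q'))
  have herr := err_bound (2^K) (M^2) (Fintype.card (VV K)) (2^i) s b' hm (by
      exact_mod_cast Nat.one_le_pow _ _ hM1) (by
      gcongr; exact_mod_cast hML) (by positivity) (by
      simp only [Fintype.card_prod, Fintype.card_fin]; push_cast; nlinarith)
      (one_le_pow₀ (by norm_num)) hs0 hb'0 (by
      rw [hb', ← mul_div_assoc]
      apply div_le_div_of_nonneg_right _ hs0.le
      calc D * (2*(2:ℝ)^K+1+1/4) ≤ 2^K * (2*(2:ℝ)^K+1+1/4) := by gcongr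
        _ ≤ _ := by nlinarith)
  push_cast at hlow herr ⊢
  refine le_trans ?_ (hlow.trans (le_of_eq ?_))
  · exact herr
  · congr 1
    funext x
    congr 1
    simp only [hSd, hSd', Multiset.map_map]
    change ∑ q, _ - ∑ q, _ = _
    rw [← sum_sub_distrib]
    refine sum_congr rfl fun q _ => ?_
    simp only [Function.comp, pv, hh]
    rcases Bool.eq_false_or_eq_true (e q) with he | he <;> simp [he, sg]

theorem avgM_avgS_low (R M H a b : ℕ) {V : Type*} [Fintype V] [DecidableEq V] (φ : Multiset V → ℕ → ℕ → E) (c : ℝ)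
    (h : ∀ e : Fin M × Fin M → Bool, c ≤ avgM R (fun x => ‖∑ q : Fin M × Fin M, sg (e q) •
        (φ x (q.1*(2*H)+a) (q.2*(2*H)+b) - φ x (q.1*(2*H)+a+H) (q.2*(2*H)+b))‖)) :
    c ≤ avgM R (fun x => avgS (φ x) M H a b) := by
  unfold avgS
  rw [avgM_mul, avgM_sum]
  have hc : (0:ℝ) < Fintype.card (Fin M × Fin M → Bool) := by exact_mod_cast Fintype.card_pos
  rw [le_inv_mul_iff₀ hc]
  calc _ = ∑ _e : Fin M × Fin M → Bool, c := by rw [sum_const, card_univ, nsmul_eq_mul]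
    _ ≤ _ := sum_le_sum fun e _ => h e

include hs47 hK hF1 hF2 hD hDm in
theorem Lhs_low : K * ((2:ℝ)^K)^2 / (4*s) ≤ avgM ((2^K)^41) (fun x => Lhs K (hh K s F ((2^K)^14) x)) := by
  unfold Lhs
  rw [avgM_sum]
  have : ∀ i ∈ range K, ((2:ℝ)^K)^2/(4*s) ≤ avgM ((2^K)^41) (fun x => ((2:ℝ)^i)⁻¹ * ∑ a ∈ range (2^i),
      ∑ b ∈ range (2*2^i), avgS (hh K s F ((2^K)^14) x) (2^(K-1-i)) (2^i) a b) := by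
    intro i hi
    rw [mem_range] at hi
    rw [avgM_mul, avgM_sum]
    have h1 : ∀ a ∈ range (2^i), ∀ b ∈ range (2*2^i), (((2^(K-1-i) : ℕ):ℝ)^2 * 2^i : ℝ) / (2*s) ≤
        avgM ((2^K)^41) (fun x => avgS (hh K s F ((2^K)^14) x) (2^(K-1-i)) (2^i) a b) := by
      intro a ha b hb
      apply avgM_avgS_low
      exact scale_low K s F D hK hD hDm hs47 hF1 hF2 i a b hi (mem_range.1 ha) (mem_range.1 hb) _ rfl
    have h2 : ∑ _a ∈ range (2^i), ∑ _b ∈ range (2*2^i), (((2^(K-1-i) : ℕ):ℝ)^2 * 2^i : ℝ) / (2*s) ≤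
       ∑ a ∈ range (2^i), avgM ((2^K)^41) (fun x =>
      ∑ b ∈ range (2*2^i), avgS (hh K s F ((2^K)^14) x) (2^(K-1-i)) (2^i) a b) := by
      refine sum_le_sum fun a ha => ?_
      rw [avgM_sum]
      exact sum_le_sum fun b hb => h1 a ha b hb
    rw [le_inv_mul_iff₀ (by positivity)]
    refine le_trans (le_of_eq ?_) h2
    have hMH : (2:ℝ)^K = 2^(K-1-i) * (2*2^i) := by
      rw [← pow_succ', ← pow_add]; congr 1; omega
    simp only [sum_const, card_range, nsmul_eq_mul]
    rw [hMH]
    push_cast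
    ring
  calc _ = ∑ _i ∈ range K, ((2:ℝ)^K)^2/(4*s) := by
        rw [sum_const, card_range, nsmul_eq_mul]; ring
    _ ≤ _ := sum_le_sum this

include hs47 hK hF2 hD in
theorem per_up (x : Multiset (VV K)) (hx : x.card ≤ Fintype.card (VV K) * (2^K)^41) :
    per (hh K s F ((2^K)^14) x) 0 0 (2^K) ≤ ((2:ℝ)^K)^2 * (5*D/(2*s)) := by
  have key : ∀ i j i' j' : ℕ, i ≤ 2^K → j ≤ 2^K → i' ≤ 2^K → j' ≤ 2^K → |(i:ℝ) - i'| + |(j:ℝ) - j'| ≤ 1 →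
      ‖hh K s F ((2^K)^14) x i j - hh K s F ((2^K)^14) x i' j'‖ ≤ 5*D/(4*s) := by
    intro i j i' j' hi hj hi' hj' h
    unfold hh hs
    rw [sub_sub_sub_cancel_right]
    unfold Fs
    rw [← avgM_sub]
    apply avgM_norm _ _ _ (by positivity)
    intro z hz
    rw [Multiset.add_cons, Multiset.add_cons]
    refine (gg_adj (gpt (2^K)) (gbase (2^K)) (gbase_close _) s F D hD hF2 _ _ (z + x) ?_).trans ?_
    · rw [Multiset.card_add]
      have := cap K s hK hs47 1 (Nat.one_le_pow _ _ (by positivity))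
      omega
    · have := vx_adj K i j i' j' hi hj hi' hj' h
      calc _ ≤ D * ((1+1/4)/s) := by gcongr
        _ = _ := by ring
  unfold per
  calc _ ≤ ∑ _x ∈ range (2^K), ∑ _y ∈ range (2^K), (5*D/(4*s) + 5*D/(4*s)) := by
        refine sum_le_sum fun a ha => sum_le_sum fun b hb => ?_
        rw [mem_range] at ha hb
        apply add_le_add
        · exact key _ _ _ _ (by omega) (by omega) (by omega) (by omega) (by push_cast; simp)
        · exact key _ _ _ _ (by omega) (by omega) (by omega) (by omega) (by push_cast; simp)
    _ = _ := by
        simp only [sum_const, card_range, nsmul_eq_mul]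
        push_cast; ring

end Comb

theorem comb (K s : ℕ) (hK : 1 ≤ K) (hs47 : (2^K)^47 ≤ s) {Ω : Type} [MeasurableSpace Ω] (ν : Measure Ω)
    (F : Finset PP → Lp ℝ 1 ν) (D : ℝ) (hD : 0 ≤ D)
    (hF1 : ∀ S T : Finset PP, S.card = s → T.card = s → emdUnif S T ≤ ‖F S - F T‖)
    (hF2 : ∀ S T : Finset PP, S.card = s → T.card = s → ‖F S - F T‖ ≤ D * emdUnif S T) :
    (K:ℝ) ≤ 100 * D := by
  rcases le_total D (2^K) with hDm | hDm
  · have h1 := Lhs_low K s F D hK hD hDm hs47 hF1 hF2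
    have h2 : avgM ((2^K)^41) (fun x => Lhs K (hh K s F ((2^K)^14) x)) ≤
        avgM (V := VV K) ((2^K)^41) (fun _ => 10 * (((2:ℝ)^K)^2 * (5*D/(2*s)))) := by
      apply avgM_mono
      intro x hx
      refine (sobolev_L1 ν K _).trans ?_
      have := per_up K s F D hK hD hs47 hF2 x hx
      linarith
    rw [avgM_const _ (by positivity)] at h2
    have hs0 : (0:ℝ) < s := by
      have : 0 < (2^K)^47 := by positivity
      exact_mod_cast lt_of_lt_of_le this hs47
    have h3 := h1.trans h2
    have hm : (0:ℝ) < ((2:ℝ)^K)^2 := by positivity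
    have e1 : K * ((2:ℝ)^K)^2 / (4*s) = (((2:ℝ)^K)^2 / (4*s)) * K := by ring
    have e2 : 10 * (((2:ℝ)^K)^2 * (5*D/(2*s))) = (((2:ℝ)^K)^2 / (4*s)) * (100 * D) := by ring
    rw [e1, e2] at h3
    exact le_of_mul_le_mul_left h3 (by positivity)
  · have : (K:ℝ) ≤ 2^K := by exact_mod_cast Nat.lt_two_pow_self.le
    linarith

section Fin1

theorem l1emb (ι : Type) [Fintype ι] : ∃ (_ : MeasurableSpace ι) (ν : Measure ι) (Λ : (ι → ℝ) → Lp ℝ 1 ν),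
    ∀ f g, dist (Λ f) (Λ g) = ∑ i, |f i - g i| := by
  letI : MeasurableSpace ι := ⊤
  have hm : ∀ f : ι → ℝ, MemLp f 1 (Measure.count : Measure ι) := by
    intro f
    rw [memLp_one_iff_integrable]
    exact Integrable.of_finite
  refine ⟨⊤, Measure.count, fun f => (hm f).toLp f, ?_⟩
  intro f g
  rw [dist_eq_norm, ← MemLp.toLp_sub, L1.norm_eq_integral_norm]
  rw [integral_congr_ae (g := fun i => |f i - g i|)]
  · rw [integral_fintype Integrable.of_finite]
    simp [Measure.real]
  · filter_upwards [MemLp.coeFn_toLp ((hm f).sub (hm g))] with i hi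
    rw [hi]; rfl

noncomputable def ell (k : ℕ) (z : PP) : ℝ := z 0 + k * z 1

theorem ell_lip (k : ℕ) (x y : PP) : |ell k x - ell k y| ≤ (1 + k) * dist x y := by
  have h0 := le_dist_PP x y 0
  have h1 := le_dist_PP x y 1
  have hk : (0:ℝ) ≤ k := by positivity
  have e : ell k x - ell k y = (x 0 - y 0) + k * (x 1 - y 1) := by unfold ell; ring
  rw [e]
  have h2 := abs_add_le (x 0 - y 0) (k * (x 1 - y 1))
  rw [abs_mul, abs_of_nonneg hk] at h2
  nlinarith

theorem ell_good (s : ℕ) (x y : PP) (k k' : ℕ) (hkk : k ≠ k') (hk : k ≤ s^2) (hk' : k' ≤ s^2)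
    (h : |ell k x - ell k y| < (1/(3+2*(s:ℝ)^2)) * dist x y)
    (h' : |ell k' x - ell k' y| < (1/(3+2*(s:ℝ)^2)) * dist x y) : False := by
  wlog hlt : k < k' generalizing k k'
  · exact this k' k hkk.symm hk' hk h' h (by omega)
  set c := 1/(3+2*(s:ℝ)^2) with hc
  have hc1 : c * (3+2*(s:ℝ)^2) = 1 := by rw [hc]; field_simp
  have e : ell k x - ell k y = (x 0 - y 0) + k * (x 1 - y 1) := by unfold ell; ring
  have e' : ell k' x - ell k' y = (x 0 - y 0) + k' * (x 1 - y 1) := by unfold ell; ring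
  rw [e] at h
  rw [e'] at h'
  have hd := dist_PP_le x y
  set p := x 0 - y 0
  set r := x 1 - y 1
  set n := dist x y
  have h1 : (k:ℝ) + 1 ≤ k' := by exact_mod_cast hlt
  have hks : (k:ℝ) ≤ (s:ℝ)^2 := by exact_mod_cast hk
  have hk0 : (0:ℝ) ≤ k := by positivity
  have hr : |r| < 2*(c*n) := by
    have a1 : ((k':ℝ) - k) * r = (p + k' * r) - (p + k*r) := by ring
    have a2 := abs_sub (p + k' * r) (p + k*r)
    rw [← a1, abs_mul, abs_of_nonneg (by linarith)] at a2
    nlinarith [abs_nonneg r]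
  have hp : |p| < c*n + k * |r| := by
    have a1 : p = (p + k*r) - k*r := by ring
    have a2 := abs_sub (p + k*r) (k*r)
    rw [← a1, abs_mul, abs_of_nonneg hk0] at a2
    linarith
  have h3 : (k:ℝ) * |r| ≤ (s:ℝ)^2 * (2*(c*n)) := by
    apply mul_le_mul hks hr.le (abs_nonneg _) (by positivity)
  have h4 : c*n + (s:ℝ)^2 * (2*(c*n)) + 2*(c*n) = n := by
    calc _ = (c * (3+2*(s:ℝ)^2)) * n := by ring
      _ = n := by rw [hc1, one_mul]
  linarith

variable (s : ℕ)

abbrev Ms := {S : Finset PP // S.card = s}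

noncomputable def en (S : Ms s) (i : Fin s) : PP := ((S.1.equivFinOfCardEq S.2).symm i).1

theorem en_sum (S : Ms s) (φ : PP → ℝ) : ∑ z ∈ S.1, φ z = ∑ i, φ (en s S i) := by
  rw [← Finset.sum_coe_sort, ← (S.1.equivFinOfCardEq S.2).symm.sum_comp]
  rfl

noncomputable def yy (S : Ms s) (k : ℕ) (i : Fin s) : PP :=
  en s S (Tuple.sort (fun i => ell k (en s S i)) i)

theorem yy_sum (S : Ms s) (k : ℕ) (φ : PP → ℝ) : ∑ z ∈ S.1, φ z = ∑ i, φ (yy s S k i) := by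
  rw [en_sum]
  exact (Equiv.sum_comp (Tuple.sort (fun i => ell k (en s S i))) (fun i => φ (en s S i))).symm

theorem yy_mono (S : Ms s) (k : ℕ) : Monotone (fun i => ell k (yy s S k i)) :=
  Tuple.monotone_sort (fun i => ell k (en s S i))

theorem low_emb (hs : 0 < s) (S T : Ms s) : emdUnif S.1 T.1 ≤
    ∑ p : Fin (s^2+1) × Fin s, ((3+2*(s:ℝ)^2)/s) * |ell p.1 (yy s S p.1 p.2) - ell p.1 (yy s T p.1 p.2)| := by
  have hs' : (0:ℝ) < s := by exact_mod_cast hs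
  obtain ⟨k, hk⟩ : ∃ k : Fin (s^2+1), ∀ i j, (1/(3+2*(s:ℝ)^2)) * dist (en s S i) (en s T j) ≤
      |ell k (en s S i) - ell k (en s T j)| := by
    by_contra! hcon
    choose I J hIJ using hcon
    obtain ⟨k, k', hne, he⟩ := Fintype.exists_ne_map_eq_of_card_lt (fun k => (I k, J k)) (by simp [sq])
    simp only [Prod.mk.injEq] at he
    have h1 := hIJ k
    have h2 := hIJ k'
    rw [← he.1, ← he.2] at h2
    exact ell_good s _ _ k k' (fun h => hne (Fin.ext h)) (Nat.lt_succ_iff.1 k.2) (Nat.lt_succ_iff.1 k'.2) h1 h2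
  have h1 : emdUnif S.1 T.1 ≤ (∑ i, dist (yy s S k i) (yy s T k i)) / s := by
    apply emd_le S.2 T.2
    intro φ hφ
    rw [yy_sum s S k, yy_sum s T k, ← sum_sub_distrib]
    refine (abs_sum_le_sum_abs _ _).trans (sum_le_sum fun i _ => ?_)
    simpa [Real.dist_eq] using hφ.dist_le_mul (yy s S k i) (yy s T k i)
  refine h1.trans ?_
  rw [Fintype.sum_prod_type]
  refine le_trans ?_ (single_le_sum (f := fun k : Fin (s^2+1) => ∑ i : Fin s, ((3+2*(s:ℝ)^2)/s) *
    |ell k (yy s S k i) - ell k (yy s T k i)|) (fun k _ => sum_nonneg fun i _ => by positivity) (mem_univ k))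
  rw [sum_div]
  refine sum_le_sum fun i _ => ?_
  have h2 := hk (Tuple.sort (fun i => ell k (en s S i)) i) (Tuple.sort (fun i => ell k (en s T i)) i)
  change (1/(3+2*(s:ℝ)^2)) * dist (yy s S k i) (yy s T k i) ≤ |ell k (yy s S k i) - ell k (yy s T k i)| at h2
  rw [one_div, inv_mul_le_iff₀ (by positivity)] at h2
  rw [div_mul_eq_mul_div]
  gcongr

theorem up_aux (S T : Ms s) (hs : 0 < s) (k : ℕ) (i : Fin s) :
    ell k (yy s T k i) - ell k (yy s S k i) ≤ (s * (1+k)) * emdUnif S.1 T.1 := by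
  have hs' : (0:ℝ) < s := by exact_mod_cast hs
  have hnn : 0 ≤ emdUnif S.1 T.1 := by
    have := le_emd S.2 T.2 (fun _ => 0) (LipschitzWith.const' 0)
    simpa using this
  set a := ell k (yy s S k i) with ha
  set b := ell k (yy s T k i) with hb
  rcases le_total b a with h | hab
  · have : 0 ≤ (s * (1+(k:ℝ))) * emdUnif S.1 T.1 := by positivity
    linarith
  set cl : ℝ → ℝ := fun t => max a (min t b) with hcl
  have cl1 : ∀ t, a ≤ cl t := fun t => le_max_left _ _
  have cl2 : ∀ t, cl t ≤ b := fun t => max_le hab (min_le_right _ _)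
  have cl3 : ∀ t, t ≤ a → cl t = a := fun t ht => by
    simp only [hcl]; rw [min_eq_left (ht.trans hab), max_eq_left ht]
  have cl4 : ∀ t, b ≤ t → cl t = b := fun t ht => by
    simp only [hcl]; rw [min_eq_right ht, max_eq_right hab]
  have clip : ∀ t u, |cl t - cl u| ≤ |t - u| := by
    intro t u
    have h1 := abs_max_sub_max_le_abs (min t b) (min u b) a
    have h2 := abs_min_sub_min_le_max t b u b
    simp only [hcl]
    rw [max_comm a, max_comm a]
    refine h1.trans (h2.trans ?_)
    simp
  have hk : (0:ℝ) < 1 + k := by positivity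
  set φ : PP → ℝ := fun z => - (cl (ell k z) / (1+k)) with hφ
  have hL : LipschitzWith 1 φ := by
    apply LipschitzWith.of_dist_le_mul
    intro x y
    rw [Real.dist_eq]
    simp only [hφ, NNReal.coe_one, one_mul]
    have e : -(cl (ell k x) / (1+(k:ℝ))) - -(cl (ell k y) / (1+k)) = (cl (ell k y) - cl (ell k x))/(1+k) := by ring
    rw [e, abs_div, abs_of_pos hk, div_le_iff₀ hk]
    have := (clip (ell k y) (ell k x)).trans (ell_lip k y x)
    rw [dist_comm] at this
    linarith
  have h1 := le_emd S.2 T.2 φ hL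
  rw [yy_sum s S k, yy_sum s T k, ← sum_sub_distrib] at h1
  have h2 : (b - a)/(1+k) ≤ ∑ j, (φ (yy s S k j) - φ (yy s T k j)) := by
    have e : ∀ j, φ (yy s S k j) - φ (yy s T k j) = (cl (ell k (yy s T k j)) - cl (ell k (yy s S k j)))/(1+k) := by
      intro j; simp only [hφ]; ring
    refine le_trans (le_of_eq ?_) (single_le_sum (f := fun j => φ (yy s S k j) - φ (yy s T k j)) ?_ (mem_univ i))
    · simp only [e]
      rw [← hb, ← ha, cl3 a le_rfl, cl4 b le_rfl]
    · intro j _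
      simp only [e]
      apply div_nonneg _ hk.le
      rcases le_total j i with hj | hj
      · rw [cl3 _ (yy_mono s S k hj)]
        linarith [cl1 (ell k (yy s T k j))]
      · rw [cl4 _ (yy_mono s T k hj)]
        linarith [cl2 (ell k (yy s S k j))]
  have h3 : (b-a)/(1+k)/s ≤ emdUnif S.1 T.1 := le_trans (by gcongr) h1
  rw [div_div, div_le_iff₀ (by positivity)] at h3
  linarith

theorem emd_symm (S T : Finset PP) : emdUnif S T = emdUnif T S := by
  unfold emdUnif
  congr 1
  ext c
  constructor <;> rintro ⟨f, hf, rfl⟩ <;> exact ⟨f, hf, abs_sub_comm _ _⟩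

theorem finite_dist (hs : 0 < s) : ∃ D : ℝ, 1 ≤ D ∧ ∃ (Ω : Type) (_ : MeasurableSpace Ω) (ν : Measure Ω)
    (f : Ms s → Lp ℝ 1 ν), ∀ x y : Ms s,
      emdUnif x.1 y.1 ≤ dist (f x) (f y) ∧ dist (f x) (f y) ≤ D * emdUnif x.1 y.1 := by
  obtain ⟨ms, ν, Λ, hΛ⟩ := l1emb (Fin (s^2+1) × Fin s)
  have hs' : (0:ℝ) < s := by exact_mod_cast hs
  set C : ℝ := ∑ p : Fin (s^2+1) × Fin s, ((3+2*(s:ℝ)^2)/s) * (s * (1+(p.1:ℕ))) with hC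
  refine ⟨max 1 C, le_max_left _ _, _, ms, ν,
    fun S => Λ (fun p => ((3+2*(s:ℝ)^2)/s) * ell p.1 (yy s S p.1 p.2)), ?_⟩
  intro S T
  have hnn : 0 ≤ emdUnif S.1 T.1 := by
    have := le_emd S.2 T.2 (fun _ => 0) (LipschitzWith.const' 0)
    simpa using this
  have e : ∀ p : Fin (s^2+1) × Fin s, |((3+2*(s:ℝ)^2)/s) * ell p.1 (yy s S p.1 p.2) -
      ((3+2*(s:ℝ)^2)/s) * ell p.1 (yy s T p.1 p.2)| =
      ((3+2*(s:ℝ)^2)/s) * |ell p.1 (yy s S p.1 p.2) - ell p.1 (yy s T p.1 p.2)| := by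
    intro p
    rw [← mul_sub, abs_mul, abs_of_nonneg (by positivity)]
  rw [hΛ]
  simp only [e]
  refine ⟨low_emb s hs S T, ?_⟩
  calc _ ≤ C * emdUnif S.1 T.1 := by
        rw [hC, sum_mul]
        refine sum_le_sum fun p _ => ?_
        rw [mul_assoc]
        gcongr
        rw [abs_le]
        have h1 := up_aux s S T hs p.1 p.2
        have h2 := up_aux s T S hs p.1 p.2
        rw [emd_symm] at h2
        constructor <;> linarith
    _ ≤ _ := by gcongr; exact le_max_right _ _

end Fin1

/-- There exist constants `c > 0` and `s₀` such that for every integer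
`s ≥ s₀`, `c₁(M₂^s) ≥ c·log s`, where `M₂^s` is the set of uniform probability
distributions on `s`-point subsets of the Euclidean plane with the earth mover's
distance. -/
theorem c1_uniform_distributions_lower :
    ∃ c : ℝ, 0 < c ∧ ∃ s₀ : ℕ, ∀ s : ℕ, s₀ ≤ s →
      c1OfDist
          (fun S T : {S : Finset (EuclideanSpace ℝ (Fin 2)) // S.card = s} =>
            emdUnif S.1 T.1) ≥
        c * Real.log s := by
  refine ⟨1/9400, by norm_num, 2^47, fun s hs => ?_⟩
  have hs0 : 0 < s := lt_of_lt_of_le (by positivity) hs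
  unfold c1OfDist
  apply le_csInf
  · obtain ⟨D, hD⟩ := finite_dist s hs0
    exact ⟨D, hD⟩
  · rintro D ⟨hD1, Ω, ms, ν, f, hf⟩
    set N := Nat.log 2 s with hN
    have hN47 : 47 ≤ N := Nat.le_log_of_pow_le (by norm_num) hs
    have hK1 : 1 ≤ N / 47 := (Nat.le_div_iff_mul_le (by norm_num)).2 (by omega)
    have hpow : (2^(N/47))^47 ≤ s := by
      rw [← pow_mul]
      calc 2^(N/47*47) ≤ 2^N := Nat.pow_le_pow_right (by norm_num) (Nat.div_mul_le_self _ _)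
        _ ≤ s := Nat.pow_log_le_self 2 hs0.ne'
    have hc := comb (N/47) s hK1 hpow ν (fun S => if h : S.card = s then f ⟨S, h⟩ else 0) D (by linarith)
      (by
        intro S T hS hT
        simp only [hS, hT, dif_pos]
        rw [← dist_eq_norm]
        exact (hf ⟨S, hS⟩ ⟨T, hT⟩).1)
      (by
        intro S T hS hT
        simp only [hS, hT, dif_pos]
        rw [← dist_eq_norm]
        exact (hf ⟨S, hS⟩ ⟨T, hT⟩).2)
    have hlog : Real.log s ≤ N + 1 := by
      have h1 : (s:ℝ) ≤ 2^(N+1) := by exact_mod_cast (Nat.lt_pow_succ_log_self (by norm_num) s).le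
      have h2 : Real.log s ≤ Real.log (2^(N+1)) := Real.log_le_log (by exact_mod_cast hs0) h1
      rw [Real.log_pow] at h2
      have h3 : Real.log 2 ≤ 1 := by linarith [Real.log_two_lt_d9]
      push_cast at h2
      nlinarith [(Nat.cast_nonneg N : (0:ℝ) ≤ N)]
    have h4 : N + 1 ≤ 94 * (N/47) := by omega
    have h5 : (N:ℝ) + 1 ≤ 94 * ((N/47 : ℕ):ℝ) := by exact_mod_cast h4
    linarith
end

section
/- Let G be an st-graph whose thickness function th_G is witnessed by a finite index set I and directed edge paths {γ_i}_{i∈I} from s_G to t_G. Then: (1) Σ_{e∈E(G)} th_G(e)·d_G(e) = 1; and (2) for every A ⊆ V(G) containing exactly one of s_G and t_G, Σ_{e∈∂_G A} th_G(e) ≥ 1, where ∂_G A is the set of edges with exactly one endpoint in A. -/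
open Finset

/-- A finite weighted directed graph with distinguished source and sink vertices, edge
lengths, and an edge thickness function. This is the underlying data of an `st`-graph. -/
structure WGraph : Type 1 where
  /-- vertex set -/
  V : Type
  /-- edge index set -/
  ι : Type
  finV : Fintype V
  decV : DecidableEq V
  finι : Fintype ι
  decι : DecidableEq ι
  /-- initial vertex of an edge -/
  src : ι → V
  /-- terminal vertex of an edge -/
  dst : ι → V
  /-- length of an edge -/
  len : ι → ℝ
  /-- thickness of an edge -/
  th : ι → ℝ
  /-- source vertex -/
  s : V
  /-- sink vertex -/
  t : V

attribute [instance] WGraph.finV WGraph.decV WGraph.finι WGraph.decι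

namespace WGraph

/-- Initial vertex of a step (an edge traversed forwards or backwards). -/
def stepSrc (G : WGraph) (p : G.ι × Bool) : G.V := if p.2 then G.src p.1 else G.dst p.1

/-- Terminal vertex of a step. -/
def stepDst (G : WGraph) (p : G.ι × Bool) : G.V := if p.2 then G.dst p.1 else G.src p.1

/-- `G.IsWalk x y l` : the list of steps `l` forms a walk from `x` to `y` in the underlying
undirected graph of `G`. -/
def IsWalk (G : WGraph) : G.V → G.V → List (G.ι × Bool) → Prop
  | x, y, [] => x = y
  | x, y, p :: l => G.stepSrc p = x ∧ G.IsWalk (G.stepDst p) y l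

/-- `G.IsDiWalk x y l` : the list of edges `l` forms a directed walk from `x` to `y`. -/
def IsDiWalk (G : WGraph) : G.V → G.V → List G.ι → Prop
  | x, y, [] => x = y
  | x, y, e :: l => G.src e = x ∧ G.IsDiWalk (G.dst e) y l

/-- The length of a directed walk. -/
def diLen (G : WGraph) (l : List G.ι) : ℝ := (l.map G.len).sum

/-- The weighted shortest-path metric of `G`. -/
noncomputable def gdist (G : WGraph) (x y : G.V) : ℝ :=
  sInf { c : ℝ | ∃ l : List (G.ι × Bool), G.IsWalk x y l ∧
    c = (l.map fun p => G.len p.1).sum }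

end WGraph

/-- `G` is an `st`-graph: it has positive edge lengths and thicknesses, it is connected,
its weighted shortest-path metric satisfies `d(s,t) = 1`, every directed path is a
geodesic, and the thickness function is witnessed by a finite nonempty family of directed
edge paths from `s` to `t` via `th(e) = |{i : e ∈ γ_i}| / |I|`. -/
structure IsSTGraph (G : WGraph) : Prop where
  s_ne_t : G.s ≠ G.t
  len_pos : ∀ e, 0 < G.len e
  th_pos : ∀ e, 0 < G.th e
  conn : ∀ x y : G.V, ∃ l, G.IsWalk x y l
  dist_st : G.gdist G.s G.t = 1
  dir_geodesic : ∀ (x y : G.V) (l : List G.ι), G.IsDiWalk x y l → G.gdist x y = G.diLen l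
  th_witness : ∃ (m : ℕ) (γ : Fin (m + 1) → List G.ι),
    (∀ i, G.IsDiWalk G.s G.t (γ i)) ∧
    ∀ e : G.ι, G.th e = ((Finset.univ.filter fun i => e ∈ γ i).card : ℝ) / (m + 1)

/-- `G` is an `st`-path: it consists of a single directed path from `s` to `t`, and all
edges have thickness `1`. -/
def IsSTPath (G : WGraph) : Prop :=
  ∃ (k : ℕ) (E : Fin k ≃ G.ι) (v : Fin (k + 1) → G.V),
    Function.Bijective v ∧ v 0 = G.s ∧ v (Fin.last k) = G.t ∧
    (∀ i : Fin k, G.src (E i) = v i.castSucc ∧ G.dst (E i) = v i.succ) ∧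
    (∀ e, G.th e = 1)

namespace WGraph

/-- The map sending a vertex of `H` to the corresponding vertex of `G ⊘ H` obtained by
replacing the edge `e` of `G` with a copy of `H` (where `s_H` is identified with the
initial vertex of `e` and `t_H` with the terminal vertex of `e`). -/
def slashEmbed (G H : WGraph) (e : G.ι) (v : H.V) :
    G.V ⊕ (G.ι × {v : H.V // v ≠ H.s ∧ v ≠ H.t}) :=
  if hs : v = H.s then Sum.inl (G.src e)
  else if ht : v = H.t then Sum.inl (G.dst e)
  else Sum.inr (e, ⟨v, hs, ht⟩)

/-- The slash product `G ⊘ H`: every edge of `G` is replaced by a copy of `H`. New edge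
lengths and thicknesses are the products of the corresponding ones of `G` and `H`. -/
def slash (G H : WGraph) : WGraph where
  V := G.V ⊕ (G.ι × {v : H.V // v ≠ H.s ∧ v ≠ H.t})
  ι := G.ι × H.ι
  finV := inferInstance
  decV := inferInstance
  finι := inferInstance
  decι := inferInstance
  src := fun p => slashEmbed G H p.1 (H.src p.2)
  dst := fun p => slashEmbed G H p.1 (H.dst p.2)
  len := fun p => G.len p.1 * H.len p.2
  th := fun p => G.th p.1 * H.th p.2
  s := Sum.inl G.s
  t := Sum.inl G.t

/-- The trivial `st`-path: a single directed edge from `s` to `t` of length 1 and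
thickness 1. -/
def edgeGraph : WGraph where
  V := Bool
  ι := Unit
  finV := inferInstance
  decV := inferInstance
  finι := inferInstance
  decι := inferInstance
  src := fun _ => false
  dst := fun _ => true
  len := fun _ => 1
  th := fun _ => 1
  s := false
  t := true

/-- Slash powers: `G^{⊘0}` is a single directed edge from `s` to `t` of length 1 and
thickness 1, and `G^{⊘(n+1)} = G^{⊘n} ⊘ G`. -/
def slashPow (G : WGraph) : ℕ → WGraph
  | 0 => edgeGraph
  | n + 1 => (G.slashPow n).slash G

end WGraph

theorem WGraph.diWalk_prefix (G : WGraph) (e : G.ι) (b : List G.ι) (y : G.V) :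
    ∀ (a : List G.ι) (x : G.V), G.IsDiWalk x y (a ++ e :: b) → G.IsDiWalk x (G.src e) a
  | [], _, h => h.1.symm
  | _ :: a, _, h => ⟨h.1, G.diWalk_prefix e b y a _ h.2⟩

theorem WGraph.diLen_nonneg (G : WGraph) (hG : IsSTGraph G) (l : List G.ι) :
    0 ≤ G.diLen l := by
  unfold WGraph.diLen
  apply List.sum_nonneg
  intro x hx
  obtain ⟨e, -, rfl⟩ := List.mem_map.1 hx
  exact (hG.len_pos e).le

theorem WGraph.diWalk_nodup (G : WGraph) (hG : IsSTGraph G) (y : G.V) :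
    ∀ (l : List G.ι) (x : G.V), G.IsDiWalk x y l → l.Nodup
  | [], _, _ => List.nodup_nil
  | e :: l, _, h => by
    refine List.nodup_cons.2 ⟨fun hmem => ?_, G.diWalk_nodup hG y l _ h.2⟩
    obtain ⟨a, b, rfl⟩ := List.append_of_mem hmem
    have h1 : G.IsDiWalk (G.src e) (G.src e) (e :: a) :=
      ⟨rfl, G.diWalk_prefix e b y a _ h.2⟩
    have h2 := hG.dir_geodesic _ _ _ h1
    have h3 := hG.dir_geodesic (G.src e) (G.src e) [] rfl
    have h4 := G.diLen_nonneg hG a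
    have h5 := hG.len_pos e
    simp only [WGraph.diLen, List.map_cons, List.sum_cons, List.map_nil, List.sum_nil] at h2 h3 h4
    linarith

theorem WGraph.diWalk_crosses (G : WGraph) (A : Finset G.V) (y : G.V) :
    ∀ (l : List G.ι) (x : G.V), G.IsDiWalk x y l → ((x ∈ A ∧ y ∉ A) ∨ (x ∉ A ∧ y ∈ A)) →
      ∃ e ∈ l, (G.src e ∈ A ∧ G.dst e ∉ A) ∨ (G.src e ∉ A ∧ G.dst e ∈ A)
  | [], x, h, hA => by
    have hxy : x = y := h
    subst hxy
    tauto
  | e :: l, x, h, hA => by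
    by_cases hc : (G.src e ∈ A ∧ G.dst e ∉ A) ∨ (G.src e ∉ A ∧ G.dst e ∈ A)
    · exact ⟨e, List.mem_cons_self, hc⟩
    · have h1 := h.1
      subst h1
      obtain ⟨f, hf, hcross⟩ := G.diWalk_crosses A y l _ h.2 (by tauto)
      exact ⟨f, List.mem_cons_of_mem _ hf, hcross⟩

/-- Let `G` be an `st`-graph (whose thickness function is witnessed by a
finite family of directed edge paths from `s_G` to `t_G`). Then:
(1) `Σ_{e∈E(G)} th_G(e)·d_G(e) = 1`; and
(2) for every `A ⊆ V(G)` containing exactly one of `s_G`, `t_G`,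
`Σ_{e∈∂_G A} th_G(e) ≥ 1`, where `∂_G A` is the set of edges with exactly one endpoint
in `A`. -/
theorem stGraph_thickness_facts (G : WGraph) (hG : IsSTGraph G) :
    (∑ e, G.th e * G.gdist (G.src e) (G.dst e) = 1) ∧
    ∀ A : Finset G.V, ((G.s ∈ A ∧ G.t ∉ A) ∨ (G.s ∉ A ∧ G.t ∈ A)) →
      1 ≤ ∑ e ∈ Finset.univ.filter
            (fun e => (G.src e ∈ A ∧ G.dst e ∉ A) ∨ (G.src e ∉ A ∧ G.dst e ∈ A)),
          G.th e := by
  obtain ⟨m, γ, hγ, hth⟩ := hG.th_witness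
  have hm : (0 : ℝ) < m + 1 := by positivity
  have hthe : ∀ e, G.th e = (∑ i, if e ∈ γ i then (1 : ℝ) else 0) / (m + 1) := by
    intro e
    rw [hth e, Finset.sum_boole]
  constructor
  · have hd : ∀ e, G.gdist (G.src e) (G.dst e) = G.len e := by
      intro e
      rw [hG.dir_geodesic _ _ [e] ⟨rfl, rfl⟩]
      simp [WGraph.diLen]
    have hl : ∀ i, (∑ e, if e ∈ γ i then G.len e else 0) = 1 := by
      intro i
      have h1 := hG.dir_geodesic _ _ _ (hγ i)
      rw [hG.dist_st, WGraph.diLen, ← List.sum_toFinset _ (G.diWalk_nodup hG _ _ _ (hγ i))] at h1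
      rw [h1, ← Finset.sum_filter]
      congr 1
      ext e
      simp
    calc ∑ e, G.th e * G.gdist (G.src e) (G.dst e)
        = (∑ e, ∑ i, if e ∈ γ i then G.len e else 0) / (m + 1) := by
          rw [Finset.sum_div]
          refine Finset.sum_congr rfl fun e _ => ?_
          rw [hd, hthe, div_mul_eq_mul_div, Finset.sum_mul]
          simp only [ite_mul, one_mul, zero_mul]
      _ = 1 := by
          rw [Finset.sum_comm]
          simp only [hl]
          simp [ne_of_gt hm]
  · intro A hA
    simp only [hthe]
    rw [← Finset.sum_div, le_div_iff₀ hm, Finset.sum_comm, one_mul]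
    calc (m + 1 : ℝ) = ∑ i : Fin (m + 1), (1 : ℝ) := by simp
      _ ≤ _ := by
        refine Finset.sum_le_sum fun i _ => ?_
        obtain ⟨e, he, hc⟩ := G.diWalk_crosses A _ _ _ (hγ i) hA
        have hmem : e ∈ Finset.univ.filter (fun e => (G.src e ∈ A ∧ G.dst e ∉ A) ∨
            (G.src e ∉ A ∧ G.dst e ∈ A)) := Finset.mem_filter.2 ⟨Finset.mem_univ e, hc⟩
        have := Finset.single_le_sum
          (f := fun e => if e ∈ γ i then (1 : ℝ) else 0)
          (fun e _ => by positivity) hmem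
        simp only [he, if_true] at this
        exact this
end
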